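/- Under the stated dimension-indexed Q-learning setting with bounded rewards, the following two claims hold. (i) For every d ∈ ℕ there exists a unique bounded (ℬ(ℝ^d) ⊗ 2^A)/ℬ(ℝ)-measurable function Q_d : ℝ^d × A → ℝ satisfying for all x ∈ ℝ^d and a ∈ A that Q_d(x,a) = g_d(x,a) + δ_d E[max_{b∈A} Q_d(X_d^{0,x,a}, b)]. (ii) There exist N : (0,1] → ℕ and c ∈ ℝ such that for all d ∈ ℕ and ε ∈ (0,1] it holds that 𝔠_{d, N_ε} ≤ c ℛ_d ε^{−c} and sup_{x∈ℝ^d} (E[max_{a∈A} |Q_d(x,a) − 𝒬_{d, N_ε}^0(x,a)|²])^{1/2} ≤ ε. -/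

import Mathlib

open MeasureTheory

/-!
Write `a = |A|`, `r = M ^ (-1/2)`, and let `‖·‖` denote the `L²(μ)` norm. Everything is done for one
fixed dimension with an arbitrary measurable state space `E`; the resulting constants depend only
on `M`, `a` and the bound `K` of the rewards, hence not on `d`.

*Bellman equation.* The Bellman operator is a `δ`-contraction in the supremum norm, so its iterates
started at `0` converge geometrically to the unique bounded measurable fixed point `q`
(`exists_bellman`, `bellman_unique`).

*Structure of the iterates.* `Q n θ` depends only on the σ-algebras `F η` with `η` a strict
descendant of `θ` (`measurable_Q_sig`), different summands of the recursion depend on disjoint sets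
of descendants, and by induction the law of the field `Q n θ` does not depend on `θ`
(`identDistrib_Q`). The law of a random field at independent random points is determined by the two
laws (`identDistrib_comp`), so all summands of level `l` have the same mean and the means telescope
to `𝔼[max_b Q n [0] (X [0] x a) b]`.

*Error recursion.* Hence `q - Q (n + 1) θ` is `δ` times a bias, at most the `L²` error of level `n`,
minus centred Monte Carlo averages. A summand of level `l ≥ 1` has `L²` norm at most `e l + e (l - 1)`,
where `e l` bounds the `L²` error of level `l` uniformly in the state, and averaging `M ^ (n + 1 - l)`
independent copies gains the factor `r ^ (n + 1 - l)`; the maximum over the actions costs a factor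
`a` (`eLpNorm_err_step`).

*Rate.* The hypothesis on `M` says `δ ≤ D := 1 - 2 a r`. Inserting `e l = B ρ ^ l` in the recursion
requires `D / ρ + D a r (1 + 1/ρ) / (ρ - r) ≤ 1`. This holds strictly at `ρ = 1`, hence for some
`ρ < 1` (`exists_rate`), which gives `e n ≤ B ρ ^ n`.

*Complexity.* The cost recursion gives `C n ≤ R (4 M) ^ n` (`cost_le`), and taking `N ε` to be the
first `n` with `B ρ ^ n ≤ ε` gives a cost polynomial in `1 / ε` (`exists_complexity`).
-/

set_option linter.unusedSectionVars false

namespace MLFP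

open ProbabilityTheory

/-! ### Finite maxima -/

section Sup
variable {A : Type*} [Fintype A] [Nonempty A]

lemma abs_ciSup_sub_le (f h : A → ℝ) :
    |(⨆ b, f b) - ⨆ b, h b| ≤ ⨆ b, |f b - h b| := by
  have hb : ∀ u : A → ℝ, BddAbove (Set.range u) := fun u => (Set.finite_range u).bddAbove
  have h1 : ∀ u v : A → ℝ, (⨆ b, u b) ≤ (⨆ b, v b) + ⨆ b, |u b - v b| := fun u v =>
    ciSup_le fun b => by
      have h2 := le_ciSup (hb v) b
      have h3 := le_ciSup (hb fun b => |u b - v b|) b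
      have h4 := le_abs_self (u b - v b)
      linarith
  rw [abs_le]
  constructor
  · have := h1 h f
    simp only [abs_sub_comm (h _) (f _)] at this
    linarith
  · linarith [h1 f h]

lemma ciSup_abs_le_sum (f : A → ℝ) : (⨆ b, |f b|) ≤ ∑ b, |f b| :=
  ciSup_le fun b => Finset.single_le_sum (f := fun b => |f b|) (fun _ _ => abs_nonneg _)
    (Finset.mem_univ b)

lemma ciSup_abs_nonneg (f : A → ℝ) : 0 ≤ ⨆ b, |f b| :=
  Real.iSup_nonneg fun _ => abs_nonneg _

lemma abs_ciSup_le (f : A → ℝ) {K : ℝ} (h : ∀ b, |f b| ≤ K) : |⨆ b, f b| ≤ K := by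
  have := abs_ciSup_sub_le f 0
  simp only [Pi.zero_apply, ciSup_const, sub_zero] at this
  exact this.trans (ciSup_le h)

end Sup

/-! ### Independence and `L²` tools -/

section Tools
variable {Ω : Type*} {mΩ : MeasurableSpace Ω} {μ : Measure Ω} [IsProbabilityMeasure μ]

lemma lintegral_indepFun {S T : Type*} [MeasurableSpace S] [MeasurableSpace T] {u : Ω → S}
    {v : Ω → T} (hu : Measurable u) (hv : Measurable v) (hind : IndepFun u v μ)
    {f : S × T → ENNReal} (hf : Measurable f) :
    ∫⁻ ω, f (u ω, v ω) ∂μ = ∫⁻ ω', ∫⁻ ω, f (u ω', v ω) ∂μ ∂μ := by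
  have key := (indepFun_iff_map_prod_eq_prod_map_map hu.aemeasurable hv.aemeasurable).1 hind
  have : IsProbabilityMeasure (Measure.map v μ) :=
    Measure.isProbabilityMeasure_map hv.aemeasurable
  rw [← lintegral_map hf (hu.prodMk hv), key, lintegral_prod _ hf.aemeasurable,
    lintegral_map hf.lintegral_prod_right' hu]
  refine lintegral_congr fun ω' => ?_
  exact lintegral_map (hf.comp measurable_prodMk_left) hv

/-- If `m₁` and `m₂` are independent, the two arguments of a function that is measurable for
`m₁ ⊗ m₂` may be integrated separately along the diagonal. -/
lemma lintegral_diag {m₁ m₂ : MeasurableSpace Ω} (h₁ : m₁ ≤ mΩ) (h₂ : m₂ ≤ mΩ)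
    (hind : Indep m₁ m₂ μ) {f : Ω × Ω → ENNReal}
    (hf : @Measurable _ _ (m₁.prod m₂) _ f) :
    ∫⁻ ω, f (ω, ω) ∂μ = ∫⁻ ω', ∫⁻ ω, f (ω', ω) ∂μ ∂μ := by
  have hif : @IndepFun Ω Ω Ω mΩ m₁ m₂ id id μ := by
    refine (@IndepFun_iff_Indep Ω Ω Ω mΩ m₁ m₂ id id μ).2 ?_
    simpa using hind
  exact @lintegral_indepFun Ω mΩ μ _ Ω Ω m₁ m₂ id id (measurable_id'' h₁) (measurable_id'' h₂)
    hif f hf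

lemma eLpNorm_two_sq (f : Ω → ℝ) :
    eLpNorm f 2 μ ^ 2 = ∫⁻ ω, ENNReal.ofReal (f ω ^ 2) ∂μ := by
  have := eLpNorm_nnreal_pow_eq_lintegral (μ := μ) (f := f) (p := 2) two_ne_zero
  simp only [NNReal.coe_ofNat, ENNReal.coe_ofNat, ENNReal.rpow_ofNat] at this
  rw [this]
  refine lintegral_congr fun ω => ?_
  rw [← enorm_pow, Real.enorm_of_nonneg (sq_nonneg _)]

lemma eLpNorm_two_le_iff (f : Ω → ℝ) {b : ℝ} (hb : 0 ≤ b) :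
    eLpNorm f 2 μ ≤ ENNReal.ofReal b ↔
      ∫⁻ ω, ENNReal.ofReal (f ω ^ 2) ∂μ ≤ ENNReal.ofReal (b ^ 2) := by
  rw [← eLpNorm_two_sq, ENNReal.ofReal_pow hb]
  exact (ENNReal.pow_le_pow_left_iff two_ne_zero).symm

lemma eLpNorm_two_le_const (f : Ω → ℝ) {b : ℝ} (h : ∀ ω, |f ω| ≤ b) :
    eLpNorm f 2 μ ≤ ENNReal.ofReal b := by
  simpa using eLpNorm_le_of_ae_bound (μ := μ) (p := 2) (f := f) (C := b)
    (Filter.Eventually.of_forall h)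

lemma variance_le_of_eLpNorm {f : Ω → ℝ} (hf : Measurable f) {b : ℝ} (hb : 0 ≤ b)
    (h : eLpNorm f 2 μ ≤ ENNReal.ofReal b) : Var[f; μ] ≤ b ^ 2 := by
  refine (variance_le_expectation_sq hf.aestronglyMeasurable).trans ?_
  simp only [Pi.pow_apply]
  rw [integral_eq_lintegral_of_nonneg_ae
    (Filter.Eventually.of_forall fun ω => sq_nonneg _) (by fun_prop)]
  exact ENNReal.toReal_le_of_le_ofReal (sq_nonneg _) ((eLpNorm_two_le_iff f hb).1 h)

lemma eLpNorm_sub_integral_le {f : Ω → ℝ} (hf : MemLp f 2 μ) {b : ℝ} (hb : 0 ≤ b)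
    (h : Var[f; μ] ≤ b ^ 2) :
    eLpNorm (fun ω => f ω - ∫ ω', f ω' ∂μ) 2 μ ≤ ENNReal.ofReal b := by
  rw [eLpNorm_two_le_iff _ hb, ← evariance_eq_lintegral_ofReal, ← ofReal_variance hf]
  exact ENNReal.ofReal_le_ofReal h

lemma abs_integral_le_of_eLpNorm {f : Ω → ℝ} (hf : Measurable f) {b : ℝ} (hb : 0 ≤ b)
    (h : eLpNorm f 2 μ ≤ ENNReal.ofReal b) : |∫ ω, f ω ∂μ| ≤ b := by
  have h1 : eLpNorm f 1 μ ≤ ENNReal.ofReal b :=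
    (eLpNorm_le_eLpNorm_of_exponent_le one_le_two hf.aestronglyMeasurable).trans h
  rw [eLpNorm_one_eq_lintegral_enorm] at h1
  have h2 := enorm_integral_le_lintegral_enorm (μ := μ) f
  have h3 := h2.trans h1
  rw [← ofReal_norm, ENNReal.ofReal_le_ofReal_iff hb] at h3
  exact h3

lemma eLpNorm_two_add_le {f h : Ω → ℝ} (hf : Measurable f) (hh : Measurable h) {a b : ℝ}
    (ha : 0 ≤ a) (hb : 0 ≤ b) (h1 : eLpNorm f 2 μ ≤ ENNReal.ofReal a)
    (h2 : eLpNorm h 2 μ ≤ ENNReal.ofReal b) :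
    eLpNorm (fun ω => f ω + h ω) 2 μ ≤ ENNReal.ofReal (a + b) := by
  rw [ENNReal.ofReal_add ha hb]
  exact (eLpNorm_add_le hf.aestronglyMeasurable hh.aestronglyMeasurable one_le_two).trans
    (add_le_add h1 h2)

lemma eLpNorm_two_sum_le {ι : Type*} (s : Finset ι) {f : ι → Ω → ℝ}
    (hf : ∀ i ∈ s, Measurable (f i)) {b : ι → ℝ} (hb : ∀ i ∈ s, 0 ≤ b i)
    (h : ∀ i ∈ s, eLpNorm (f i) 2 μ ≤ ENNReal.ofReal (b i)) :
    eLpNorm (fun ω => ∑ i ∈ s, f i ω) 2 μ ≤ ENNReal.ofReal (∑ i ∈ s, b i) := by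
  rw [ENNReal.ofReal_sum_of_nonneg hb]
  have := eLpNorm_sum_le (μ := μ) (p := 2) (s := s) (f := f)
    (fun i hi => (hf i hi).aestronglyMeasurable) one_le_two
  refine le_trans (le_of_eq ?_) (this.trans (Finset.sum_le_sum h))
  congr 1
  ext ω
  simp

lemma eLpNorm_two_const_mul_le {f : Ω → ℝ} {c b : ℝ} (hc : 0 ≤ c)
    (h : eLpNorm f 2 μ ≤ ENNReal.ofReal b) :
    eLpNorm (fun ω => c * f ω) 2 μ ≤ ENNReal.ofReal (c * b) := by
  have := eLpNorm_const_smul (μ := μ) (p := 2) c f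
  rw [ENNReal.ofReal_mul hc]
  refine le_trans (le_of_eq ?_) (mul_le_mul_right h _)
  rw [← Real.enorm_of_nonneg hc, ← this]
  rfl

end Tools

/-! ### Laws of random fields evaluated at independent random points -/

section LawComp
variable {Ω E A : Type*} [MeasurableSpace E]

lemma measure_comp_mem {mΩ : MeasurableSpace Ω} {μ : Measure Ω} [IsProbabilityMeasure μ]
    {S T : Type*} [MeasurableSpace S] [MeasurableSpace T] {u : Ω → S}
    {v : Ω → T} (hu : Measurable u) (hv : Measurable v) (hind : IndepFun u v μ)
    {U : E → T → ℝ} {Y : E → A → S → E} (hY : ∀ x a, Measurable (Y x a))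
    (hU : Measurable fun p : E × T => U p.1 p.2) {B : Set (E → A → ℝ)} (hB : MeasurableSet B) :
    μ ((fun ω x a => U (Y x a (u ω)) (v ω)) ⁻¹' B) =
      ∫⁻ z, (μ.map fun ω y => U y (v ω)) {w | (fun x a => w (z (x, a))) ∈ B}
        ∂(μ.map fun ω (p : E × A) => Y p.1 p.2 (u ω)) := by
  have hUv : Measurable fun ω y => U y (v ω) :=
    measurable_pi_lambda _ fun y => hU.comp (measurable_const.prodMk hv)
  have hYu : Measurable fun ω (p : E × A) => Y p.1 p.2 (u ω) :=
    measurable_pi_lambda _ fun p => (hY p.1 p.2).comp hu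
  have hev : ∀ z : E × A → E, Measurable fun (w : E → ℝ) x a => w (z (x, a)) := fun z =>
    measurable_pi_lambda _ fun x => measurable_pi_lambda _ fun a => measurable_pi_apply _
  have hH : ∀ z : E × A → E, (μ.map fun ω y => U y (v ω)) {w | (fun x a => w (z (x, a))) ∈ B} =
      ∫⁻ ω, B.indicator (1 : (E → A → ℝ) → ENNReal) (fun x a => U (z (x, a)) (v ω)) ∂μ := by
    intro z
    refine (Measure.map_apply hUv (hev z hB)).trans ?_
    rw [← lintegral_indicator_one (hUv (hev z hB))]
    rfl
  have hHm : Measurable fun z : E × A → E =>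
      ∫⁻ ω, B.indicator (1 : (E → A → ℝ) → ENNReal) (fun x a => U (z (x, a)) (v ω)) ∂μ := by
    refine Measurable.lintegral_prod_right' (f := fun p : (E × A → E) × Ω =>
      B.indicator (1 : (E → A → ℝ) → ENNReal) (fun x a => U (p.1 (x, a)) (v p.2))) ?_
    refine (measurable_one.indicator hB).comp ?_
    refine measurable_pi_lambda _ fun x => measurable_pi_lambda _ fun a => ?_
    have hp : Measurable fun p : (E × A → E) × Ω => (p.1 (x, a), v p.2) :=
      ((measurable_pi_apply (x, a)).comp measurable_fst).prodMk (hv.comp measurable_snd)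
    exact hU.comp hp
  have hm : Measurable fun ω x a => U (Y x a (u ω)) (v ω) :=
    measurable_pi_lambda _ fun x => measurable_pi_lambda _ fun a =>
      hU.comp (((hY x a).comp hu).prodMk hv)
  simp_rw [hH]
  rw [lintegral_map hHm hYu, ← lintegral_indicator_one (hm hB)]
  refine lintegral_indepFun hu hv hind (f := fun p : S × T =>
      B.indicator (1 : (E → A → ℝ) → ENNReal) (fun x a => U (Y x a p.1) p.2)) ?_
  refine (measurable_one.indicator hB).comp ?_
  refine measurable_pi_lambda _ fun x => measurable_pi_lambda _ fun a => ?_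
  exact hU.comp (((hY x a).comp measurable_fst).prodMk measurable_snd)

lemma measure_comp_mem' {m₁ m₂ : MeasurableSpace Ω}
    {mΩ : MeasurableSpace Ω} {μ : Measure Ω} [IsProbabilityMeasure μ]
    (h₁ : m₁ ≤ mΩ) (h₂ : m₂ ≤ mΩ)
    (hind : Indep m₁ m₂ μ)
    {U : E → Ω → ℝ} {Y : E → A → Ω → E} (hY : ∀ x a, @Measurable _ _ m₁ _ (Y x a))
    (hU : @Measurable (E × Ω) ℝ (MeasurableSpace.prod inferInstance m₂) _ fun p => U p.1 p.2)
    {B : Set (E → A → ℝ)} (hB : MeasurableSet B) :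
    μ ((fun ω x a => U (Y x a ω) ω) ⁻¹' B) =
      ∫⁻ z, (μ.map fun ω y => U y ω) {w | (fun x a => w (z (x, a))) ∈ B}
        ∂(μ.map fun ω (p : E × A) => Y p.1 p.2 ω) := by
  have hif : @IndepFun Ω Ω Ω mΩ m₁ m₂ id id μ := by
    refine (@IndepFun_iff_Indep Ω Ω Ω mΩ m₁ m₂ id id μ).2 ?_
    simpa using hind
  exact @measure_comp_mem Ω E A _ mΩ μ _ Ω Ω m₁ m₂ id id (measurable_id'' h₁)
    (measurable_id'' h₂) hif U Y hY hU B hB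

lemma measurable_comp_field {m₁ m₂ : MeasurableSpace Ω} {mΩ : MeasurableSpace Ω}
    (h₁ : m₁ ≤ mΩ) (h₂ : m₂ ≤ mΩ)
    {U : E → Ω → ℝ} {Y : E → A → Ω → E} (hY : ∀ x a, @Measurable _ _ m₁ _ (Y x a))
    (hU : @Measurable (E × Ω) ℝ (MeasurableSpace.prod inferInstance m₂) _ fun p => U p.1 p.2) :
    Measurable (fun ω x a => U (Y x a ω) ω) := by
  have hU' : Measurable fun p : E × Ω => U p.1 p.2 :=
    hU.mono (sup_le_sup le_rfl (MeasurableSpace.comap_mono h₂)) le_rfl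
  refine measurable_pi_lambda _ fun x => measurable_pi_lambda _ fun a => ?_
  exact hU'.comp (((hY x a).mono h₁ le_rfl).prodMk measurable_id)

/-- The law of a random field `U` evaluated at an independent family of random points `Y` is
determined by the laws of `U` and of `Y`. -/
lemma identDistrib_comp {m₁ m₂ m₁' m₂' : MeasurableSpace Ω}
    {mΩ : MeasurableSpace Ω} {μ : Measure Ω} [IsProbabilityMeasure μ]
    (h₁ : m₁ ≤ mΩ) (h₂ : m₂ ≤ mΩ)
    (h₁' : m₁' ≤ mΩ) (h₂' : m₂' ≤ mΩ) (hind : Indep m₁ m₂ μ) (hind' : Indep m₁' m₂' μ)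
    {U U' : E → Ω → ℝ} {Y Y' : E → A → Ω → E}
    (hY : ∀ x a, @Measurable _ _ m₁ _ (Y x a)) (hY' : ∀ x a, @Measurable _ _ m₁' _ (Y' x a))
    (hU : @Measurable (E × Ω) ℝ (MeasurableSpace.prod inferInstance m₂) _ fun p => U p.1 p.2)
    (hU' : @Measurable (E × Ω) ℝ (MeasurableSpace.prod inferInstance m₂') _
      fun p => U' p.1 p.2)
    (hYid : (μ.map fun ω (p : E × A) => Y p.1 p.2 ω) = μ.map fun ω (p : E × A) => Y' p.1 p.2 ω)
    (hUid : (μ.map fun ω y => U y ω) = μ.map fun ω y => U' y ω) :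
    IdentDistrib (fun ω x a => U (Y x a ω) ω) (fun ω x a => U' (Y' x a ω) ω) μ μ := by
  refine ⟨(measurable_comp_field h₁ h₂ hY hU).aemeasurable,
    (measurable_comp_field h₁' h₂' hY' hU').aemeasurable, ?_⟩
  ext B hB
  rw [Measure.map_apply (measurable_comp_field h₁ h₂ hY hU) hB,
    Measure.map_apply (measurable_comp_field h₁' h₂' hY' hU') hB,
    measure_comp_mem' h₁ h₂ hind hY hU hB, measure_comp_mem' h₁' h₂' hind' hY' hU' hB, hYid, hUid]

end LawComp

/-! ### The index tree and the measurability of the iterates -/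

/-- The strict descendants of `θ` in the tree of multi-indices. -/
def desc (θ : List ℤ) : Set (List ℤ) := {η | ∃ t, t ≠ [] ∧ η = θ ++ t}

/-- The multi-indices on which the `i`-th summand of level `l` of an iterate at `θ` depends; the
sign of the first new entry is free, since `(θ, l, i)` and `(θ, -l, i)` both occur. -/
def blk (θ : List ℤ) (p : ℕ × ℕ) : Set (List ℤ) :=
  {η | ∃ s : ℤ, s.natAbs = p.1 ∧ ∃ t, η = θ ++ ([s, (p.2 : ℤ) + 1] ++ t)}

/-- The σ-algebra generated by the `F η` with `η ∈ S`. -/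
@[reducible] def sig {Ω : Type*} (F : List ℤ → MeasurableSpace Ω) (S : Set (List ℤ)) :
    MeasurableSpace Ω :=
  ⨆ η ∈ S, F η

lemma disjoint_blk (θ : List ℤ) {p p' : ℕ × ℕ} (h : p ≠ p') : Disjoint (blk θ p) (blk θ p') := by
  rw [Set.disjoint_left]
  rintro η ⟨s, hs, t, rfl⟩ ⟨s', hs', t', h'⟩
  simp only [List.append_cancel_left_eq, List.cons_append, List.nil_append, List.cons.injEq,
    add_left_inj, Nat.cast_inj] at h'
  exact h (Prod.ext (by rw [← hs, ← hs', h'.1]) h'.2.1)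

lemma blk_subset_desc (θ : List ℤ) (p : ℕ × ℕ) : blk θ p ⊆ desc θ := by
  rintro η ⟨s, _, t, rfl⟩
  exact ⟨_, by simp, rfl⟩

lemma desc_subset_blk (θ : List ℤ) (p : ℕ × ℕ) {s : ℤ} (hs : s.natAbs = p.1) :
    desc (θ ++ [s, (p.2 : ℤ) + 1]) ⊆ blk θ p := by
  rintro η ⟨t, _, rfl⟩
  exact ⟨s, hs, t, by simp⟩

lemma mem_blk (θ : List ℤ) (p : ℕ × ℕ) {s : ℤ} (hs : s.natAbs = p.1) :
    θ ++ [s, (p.2 : ℤ) + 1] ∈ blk θ p := ⟨s, hs, [], by simp⟩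

lemma not_mem_desc_of_length {θ η : List ℤ} (h : η.length ≤ θ.length) : η ∉ desc θ := by
  rintro ⟨t, ht, rfl⟩
  have := List.length_pos_iff.2 ht
  rw [List.length_append] at h
  omega

section Meas
variable {E A Ω : Type*} [MeasurableSpace E] [Fintype A] [Nonempty A]

/-- The field whose value at the random point `X^{(θ,l,i)}` is one summand of level `l`: the
difference of the maxima of the iterates `l` and `l - 1`, the latter being absent for `l = 0`. -/
noncomputable def fld (Q : ℕ → List ℤ → E → A → Ω → ℝ) (l : ℕ) (θ₁ θ₂ : List ℤ) (y : E)
    (ω : Ω) : ℝ :=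
  (⨆ b, Q l θ₁ y b ω) - if l = 0 then 0 else ⨆ b, Q (l - 1) θ₂ y b ω

/-- The `p.2`-th summand of level `p.1` in the recursion for the iterates. -/
noncomputable def term (X : List ℤ → E → A → Ω → E) (Q : ℕ → List ℤ → E → A → Ω → ℝ)
    (θ : List ℤ) (p : ℕ × ℕ) (x : E) (a : A) (ω : Ω) : ℝ :=
  fld Q p.1 (θ ++ [(p.1 : ℤ), (p.2 : ℤ) + 1]) (θ ++ [-(p.1 : ℤ), (p.2 : ℤ) + 1])
    (X (θ ++ [(p.1 : ℤ), (p.2 : ℤ) + 1]) x a ω) ω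

/-- The assumptions for one fixed dimension, with state space `E`. -/
structure Setting [mΩ : MeasurableSpace Ω] (μ : Measure Ω) (K : ℝ) (g : E → A → ℝ)
    (F : List ℤ → MeasurableSpace Ω) (X : List ℤ → E → A → Ω → E) (δ : ℝ) (M : ℕ)
    (Q : ℕ → List ℤ → E → A → Ω → ℝ) : Prop where
  g_meas : ∀ a, Measurable fun x => g x a
  g_bd : ∀ x a, |g x a| ≤ K
  F_le : ∀ θ, F θ ≤ mΩ
  F_indep : iIndep F μ
  X_meas : ∀ θ a, @Measurable (E × Ω) E (MeasurableSpace.prod inferInstance (F θ)) inferInstance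
    fun p => X θ p.1 a p.2
  X_id : ∀ θ η, (μ.map fun ω (p : E × A) => X θ p.1 p.2 ω) =
    μ.map fun ω (p : E × A) => X η p.1 p.2 ω
  δ_nonneg : 0 ≤ δ
  δ_lt : δ < 1
  M_pos : 1 ≤ M
  Q_rec : ∀ n θ x a ω, Q n θ x a ω = g x a + ∑ l ∈ Finset.range n, (δ * ((M : ℝ) ^ (n - l))⁻¹) *
    ∑ i ∈ Finset.range (M ^ (n - l)), term X Q θ (l, i) x a ω

lemma measurable_comp_self {m : MeasurableSpace Ω} {U : E → Ω → ℝ} {Y : Ω → E}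
    (hU : Measurable fun p : E × Ω => U p.1 p.2) (hY : Measurable Y) :
    Measurable fun ω => U (Y ω) ω :=
  hU.comp (hY.prodMk measurable_id)

lemma measurable_fld_aux [MeasurableSpace Ω] {Q : ℕ → List ℤ → E → A → Ω → ℝ} {l : ℕ}
    {θ₁ θ₂ : List ℤ} (h1 : ∀ a, Measurable fun p : E × Ω => Q l θ₁ p.1 a p.2)
    (h2 : l ≠ 0 → ∀ a, Measurable fun p : E × Ω => Q (l - 1) θ₂ p.1 a p.2) :
    Measurable fun p : E × Ω => fld Q l θ₁ θ₂ p.1 p.2 := by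
  unfold fld
  refine (Measurable.iSup h1).sub ?_
  split_ifs with h
  · exact measurable_const
  · exact Measurable.iSup (h2 h)

lemma measurable_Q_aux [MeasurableSpace Ω] {g : E → A → ℝ} {X : List ℤ → E → A → Ω → E}
    {δ : ℝ} {M : ℕ} {Q : ℕ → List ℤ → E → A → Ω → ℝ} (hg : ∀ a, Measurable fun x => g x a)
    (hQ : ∀ n θ x a ω, Q n θ x a ω = g x a + ∑ l ∈ Finset.range n, (δ * ((M : ℝ) ^ (n - l))⁻¹) *
      ∑ i ∈ Finset.range (M ^ (n - l)), term X Q θ (l, i) x a ω) (n : ℕ) :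
    ∀ θ, (∀ η ∈ desc θ, ∀ a, Measurable fun p : E × Ω => X η p.1 a p.2) →
      ∀ a, Measurable fun p : E × Ω => Q n θ p.1 a p.2 := by
  induction n using Nat.strong_induction_on with
  | _ n ih =>
    intro θ hX a
    simp_rw [hQ n θ]
    refine ((hg a).comp measurable_fst).add (Finset.measurable_sum _ fun l hl => ?_)
    refine measurable_const.mul (Finset.measurable_sum _ fun i _ => ?_)
    have hl := Finset.mem_range.1 hl
    have hsub : ∀ s : ℤ, s.natAbs = l → desc (θ ++ [s, (i : ℤ) + 1]) ⊆ desc θ := fun s hs =>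
      (desc_subset_blk θ (l, i) hs).trans (blk_subset_desc _ _)
    have hf := measurable_fld_aux (Q := Q) (l := l)
      (ih l hl (θ ++ [(l : ℤ), (i : ℤ) + 1]) fun η hη => hX η (hsub _ (by simp) hη))
      (fun _ => ih (l - 1) (by omega) (θ ++ [-(l : ℤ), (i : ℤ) + 1])
        fun η hη => hX η (hsub _ (by simp) hη))
    exact hf.comp ((hX _ (blk_subset_desc _ _ (mem_blk θ (l, i) (s := (l : ℤ)) (by simp))) a).prodMk
      measurable_snd)

end Meas

section Setting
variable {E A Ω : Type*} [MeasurableSpace E] [Fintype A] [Nonempty A] [mΩ : MeasurableSpace Ω]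
  {μ : Measure Ω} [IsProbabilityMeasure μ] {K : ℝ} {g : E → A → ℝ}
  {F : List ℤ → MeasurableSpace Ω} {X : List ℤ → E → A → Ω → E} {δ : ℝ} {M : ℕ}
  {Q : ℕ → List ℤ → E → A → Ω → ℝ}

namespace Setting

lemma sig_le (h : Setting μ K g F X δ M Q) (S : Set (List ℤ)) : sig F S ≤ mΩ :=
  iSup₂_le fun η _ => h.F_le η

lemma indep_sig (h : Setting μ K g F X δ M Q) {S T : Set (List ℤ)} (hST : Disjoint S T) :
    Indep (sig F S) (sig F T) μ :=
  indep_iSup_of_disjoint h.F_le h.F_indep hST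

lemma indep_F_sig (h : Setting μ K g F X δ M Q) {η : List ℤ} {T : Set (List ℤ)} (hη : η ∉ T) :
    Indep (F η) (sig F T) μ := by
  have := h.indep_sig (S := {η}) (T := T) (Set.disjoint_singleton_left.2 hη)
  simpa [sig] using this

lemma measurable_X_sig (h : Setting μ K g F X δ M Q) {η : List ℤ} {S : Set (List ℤ)} (hη : η ∈ S)
    (a : A) : @Measurable (E × Ω) E (MeasurableSpace.prod inferInstance (sig F S)) inferInstance
      fun p => X η p.1 a p.2 :=
  (h.X_meas η a).mono (sup_le_sup le_rfl (MeasurableSpace.comap_mono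
    (le_iSup₂_of_le η hη le_rfl))) le_rfl

lemma measurable_X_apply (h : Setting μ K g F X δ M Q) (η : List ℤ) (x : E) (a : A) :
    @Measurable Ω E (F η) _ (X η x a) :=
  (h.X_meas η a).comp (@measurable_prodMk_left _ _ _ (F η) x)

lemma measurable_Q_sig (h : Setting μ K g F X δ M Q) {θ : List ℤ} {S : Set (List ℤ)}
    (hS : desc θ ⊆ S) (n : ℕ) (a : A) :
    @Measurable (E × Ω) ℝ (MeasurableSpace.prod inferInstance (sig F S)) _
      fun p => Q n θ p.1 a p.2 :=
  @measurable_Q_aux E A Ω _ _ _ (sig F S) g X δ M Q h.g_meas h.Q_rec n θ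
    (fun _ hη a => h.measurable_X_sig (hS hη) a) a

lemma measurable_fld_sig (h : Setting μ K g F X δ M Q) {θ₁ θ₂ : List ℤ} {S : Set (List ℤ)}
    (h1 : desc θ₁ ⊆ S) (h2 : desc θ₂ ⊆ S) (l : ℕ) :
    @Measurable (E × Ω) ℝ (MeasurableSpace.prod inferInstance (sig F S)) _
      fun p => fld Q l θ₁ θ₂ p.1 p.2 :=
  @measurable_fld_aux E A Ω _ _ _ (sig F S) Q l θ₁ θ₂ (fun a => h.measurable_Q_sig h1 l a)
    (fun _ a => h.measurable_Q_sig h2 (l - 1) a)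

lemma measurable_term (h : Setting μ K g F X δ M Q) (θ : List ℤ) (p : ℕ × ℕ) (x : E) (a : A) :
    @Measurable Ω ℝ (sig F (blk θ p)) _ (term X Q θ p x a) := by
  have h1 := h.measurable_fld_sig (desc_subset_blk θ p (s := (p.1 : ℤ)) (by simp))
    (desc_subset_blk θ p (s := -(p.1 : ℤ)) (by simp)) p.1
  have h2 : @Measurable Ω E (sig F (blk θ p)) _ (X (θ ++ [(p.1 : ℤ), (p.2 : ℤ) + 1]) x a) :=
    (h.measurable_X_apply _ x a).mono
      (le_iSup₂_of_le _ (mem_blk θ p (s := (p.1 : ℤ)) (by simp)) le_rfl) le_rfl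
  exact measurable_comp_self (U := fld Q p.1 (θ ++ [(p.1 : ℤ), (p.2 : ℤ) + 1])
    (θ ++ [-(p.1 : ℤ), (p.2 : ℤ) + 1])) h1 h2

lemma measurable_term' (h : Setting μ K g F X δ M Q) (θ : List ℤ) (p : ℕ × ℕ) (x : E) (a : A) :
    Measurable (term X Q θ p x a) :=
  (h.measurable_term θ p x a).mono (h.sig_le _) le_rfl

lemma measurable_Q (h : Setting μ K g F X δ M Q) (n : ℕ) (θ : List ℤ) (a : A) :
    Measurable fun p : E × Ω => Q n θ p.1 a p.2 :=
  (h.measurable_Q_sig subset_rfl n a).mono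
    (sup_le_sup le_rfl (MeasurableSpace.comap_mono (h.sig_le _))) le_rfl

lemma measurable_X (h : Setting μ K g F X δ M Q) (θ : List ℤ) (a : A) :
    Measurable fun p : E × Ω => X θ p.1 a p.2 :=
  (h.X_meas θ a).mono
    (sup_le_sup le_rfl (MeasurableSpace.comap_mono (h.F_le _))) le_rfl

/-! ### The laws of the iterates do not depend on the multi-index -/

lemma measurable_Q_field (h : Setting μ K g F X δ M Q) (n : ℕ) (θ : List ℤ) :
    @Measurable _ _ (sig F (desc θ)) _ (fun ω x a => Q n θ x a ω) := by
  refine @measurable_pi_lambda _ _ _ (_) _ _ fun x =>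
    @measurable_pi_lambda _ _ _ (_) _ _ fun a => ?_
  exact measurable_comp_self (U := fun x ω => Q n θ x a ω) (Y := fun _ => x)
    (h.measurable_Q_sig subset_rfl n a) (@measurable_const _ _ _ (sig F (desc θ)) x)

lemma measurable_eval (x : E) (a : A) : Measurable fun w : E → A → ℝ => w x a :=
  (measurable_pi_apply a).comp (measurable_pi_apply x)

lemma measurable_eval_fst (x : E) (a : A) :
    Measurable fun w : (E → A → ℝ) × (E → A → ℝ) => w.1 x a :=
  (measurable_eval x a).comp measurable_fst

lemma measurable_eval_snd (x : E) (a : A) :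
    Measurable fun w : (E → A → ℝ) × (E → A → ℝ) => w.2 x a :=
  (measurable_eval x a).comp measurable_snd

lemma indepFun_of_sig (h : Setting μ K g F X δ M Q) {S T : Set (List ℤ)} (hST : Disjoint S T)
    {β γ : Type*} [mβ : MeasurableSpace β] [mγ : MeasurableSpace γ] {u : Ω → β} {v : Ω → γ}
    (hu : @Measurable _ _ (sig F S) _ u) (hv : @Measurable _ _ (sig F T) _ v) :
    IndepFun u v μ := by
  rw [IndepFun_iff_Indep]
  exact indep_of_indep_of_le_right (indep_of_indep_of_le_left (h.indep_sig hST) hu.comap_le)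
    hv.comap_le

lemma disjoint_desc {θ η : List ℤ} (hl : θ.length = η.length) (hne : θ ≠ η) :
    Disjoint (desc θ) (desc η) := by
  rw [Set.disjoint_left]
  rintro _ ⟨t, _, rfl⟩ ⟨t', _, h'⟩
  exact hne (List.append_inj h' hl).1

lemma identDistrib_fld (h : Setting μ K g F X δ M Q) {l : ℕ}
    (hQl : ∀ k ≤ l, ∀ θ η, IdentDistrib (fun ω x a => Q k θ x a ω) (fun ω x a => Q k η x a ω) μ μ)
    {θ₁ θ₂ η₁ η₂ : List ℤ} (hθ : l ≠ 0 → θ₁.length = θ₂.length ∧ θ₁ ≠ θ₂)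
    (hη : l ≠ 0 → η₁.length = η₂.length ∧ η₁ ≠ η₂) :
    IdentDistrib (fun ω y => fld Q l θ₁ θ₂ y ω) (fun ω y => fld Q l η₁ η₂ y ω) μ μ := by
  unfold fld
  by_cases hl : l = 0
  · subst hl
    simp only [if_true]
    exact (hQl 0 le_rfl θ₁ η₁).comp (u := fun w x => (⨆ b, w x b) - 0)
      (measurable_pi_lambda _ fun x => (Measurable.iSup fun b =>
        measurable_eval x b).sub measurable_const)
  · have hi : ∀ {θ₁ θ₂ : List ℤ}, (l ≠ 0 → θ₁.length = θ₂.length ∧ θ₁ ≠ θ₂) →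
        IndepFun (fun ω x a => Q l θ₁ x a ω) (fun ω x a => Q (l - 1) θ₂ x a ω) μ := fun hθ =>
      h.indepFun_of_sig (disjoint_desc (hθ hl).1 (hθ hl).2) (h.measurable_Q_field _ _)
        (h.measurable_Q_field _ _)
    simp only [hl, if_false]
    exact ((hQl l le_rfl θ₁ η₁).prodMk (hQl (l - 1) (by omega) θ₂ η₂) (hi hθ) (hi hη)).comp
      (u := fun w x => (⨆ b, w.1 x b) - ⨆ b, w.2 x b)
      (measurable_pi_lambda _ fun x => (Measurable.iSup fun b => measurable_eval_fst x b).sub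
        (Measurable.iSup fun b => measurable_eval_snd x b))

lemma identDistrib_term (h : Setting μ K g F X δ M Q) {p : ℕ × ℕ}
    (hQl : ∀ k ≤ p.1, ∀ θ η,
      IdentDistrib (fun ω x a => Q k θ x a ω) (fun ω x a => Q k η x a ω) μ μ) (θ η : List ℤ) :
    IdentDistrib (fun ω x a => term X Q θ p x a ω) (fun ω x a => term X Q η p x a ω) μ μ := by
  have hn : ∀ θ : List ℤ, θ ++ [(p.1 : ℤ), (p.2 : ℤ) + 1] ∉
      desc (θ ++ [(p.1 : ℤ), (p.2 : ℤ) + 1]) ∪ desc (θ ++ [-(p.1 : ℤ), (p.2 : ℤ) + 1]) := by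
    rintro θ (h' | h') <;> exact not_mem_desc_of_length (by simp) h'
  have hd : ∀ θ : List ℤ, p.1 ≠ 0 → (θ ++ [(p.1 : ℤ), (p.2 : ℤ) + 1]).length =
      (θ ++ [-(p.1 : ℤ), (p.2 : ℤ) + 1]).length ∧ θ ++ [(p.1 : ℤ), (p.2 : ℤ) + 1] ≠
      θ ++ [-(p.1 : ℤ), (p.2 : ℤ) + 1] := fun θ hp => by
    refine ⟨by simp, fun h' => hp ?_⟩
    simp only [List.append_cancel_left_eq, List.cons.injEq, and_true] at h'
    omega
  exact identDistrib_comp (h.F_le _) (h.sig_le _) (h.F_le _) (h.sig_le _)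
    (h.indep_F_sig (hn θ)) (h.indep_F_sig (hn η))
    (h.measurable_X_apply _) (h.measurable_X_apply _)
    (h.measurable_fld_sig Set.subset_union_left Set.subset_union_right p.1)
    (h.measurable_fld_sig Set.subset_union_left Set.subset_union_right p.1)
    (h.X_id _ _) (h.identDistrib_fld hQl (hd θ) (hd η)).map_eq

lemma measurable_term_field (h : Setting μ K g F X δ M Q) (θ : List ℤ) (p : ℕ × ℕ) :
    @Measurable _ _ (sig F (blk θ p)) _ (fun ω x a => term X Q θ p x a ω) :=
  @measurable_pi_lambda _ _ _ (_) _ _ fun x => @measurable_pi_lambda _ _ _ (_) _ _ fun a =>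
    h.measurable_term θ p x a

lemma identDistrib_sum (h : Setting μ K g F X δ M Q) (c : ℕ × ℕ → ℝ) (θ η : List ℤ)
    (s : Finset (ℕ × ℕ)) (hQl : ∀ p ∈ s, ∀ k ≤ p.1, ∀ θ η,
      IdentDistrib (fun ω x a => Q k θ x a ω) (fun ω x a => Q k η x a ω) μ μ) :
    IdentDistrib (fun ω x a => ∑ p ∈ s, c p * term X Q θ p x a ω)
      (fun ω x a => ∑ p ∈ s, c p * term X Q η p x a ω) μ μ := by
  induction s using Finset.induction_on with
  | empty => simpa using IdentDistrib.refl (μ := μ) measurable_const.aemeasurable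
  | insert p s hp ih =>
    have ih' := ih fun p hp => hQl p (Finset.mem_insert_of_mem hp)
    have ht := h.identDistrib_term (p := p) (hQl p (Finset.mem_insert_self _ _)) θ η
    have hi : ∀ θ, IndepFun (fun ω x a => term X Q θ p x a ω)
        (fun ω x a => ∑ p ∈ s, c p * term X Q θ p x a ω) μ := fun θ => by
      refine h.indepFun_of_sig (S := blk θ p) (T := ⋃ p' ∈ s, blk θ p') ?_
        (h.measurable_term_field θ p) ?_
      · simp only [Set.disjoint_iUnion_right]
        exact fun p' hp' => disjoint_blk θ (by rintro rfl; exact hp hp')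
      · refine @measurable_pi_lambda _ _ _ (_) _ _ fun x =>
          @measurable_pi_lambda _ _ _ (_) _ _ fun a => ?_
        refine @Finset.measurable_sum _ _ _ _ _ _ (_) _ _ fun p' hp' => ?_
        refine @Measurable.const_mul _ _ _ _ _ (_) _ ?_ _
        exact (h.measurable_term θ p' x a).mono
          (biSup_mono fun η hη => Set.mem_biUnion hp' hη) le_rfl
    have := (ht.prodMk ih' (hi θ) (hi η)).comp (u := fun w x a => c p * w.1 x a + w.2 x a)
      (measurable_pi_lambda _ fun x => measurable_pi_lambda _ fun a =>
        ((measurable_eval_fst x a).const_mul _).add (measurable_eval_snd x a))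
    simp only [Finset.sum_insert hp]
    exact this

/-- The pairs (level, sample number) occurring in the recursion for the `n`-th iterate. -/
def idx (M n : ℕ) : Finset (ℕ × ℕ) :=
  (Finset.range n).biUnion fun l => (Finset.range (M ^ (n - l))).image fun i => (l, i)

lemma Q_eq_sum_idx (h : Setting μ K g F X δ M Q) (n : ℕ) (θ : List ℤ) (x : E) (a : A) (ω : Ω) :
    Q n θ x a ω = g x a +
      ∑ p ∈ idx M n, (δ * ((M : ℝ) ^ (n - p.1))⁻¹) * term X Q θ p x a ω := by
  rw [h.Q_rec, idx, Finset.sum_biUnion]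
  · congr 1
    refine Finset.sum_congr rfl fun l _ => ?_
    rw [Finset.sum_image (by intro i _ j _ hij; simpa using hij), Finset.mul_sum]
  · intro l _ l' _ hl
    simp only [Function.onFun, Finset.disjoint_left, Finset.mem_image]
    rintro _ ⟨i, _, rfl⟩ ⟨j, _, hj⟩
    exact hl (by simpa using (congrArg Prod.fst hj).symm)

lemma identDistrib_Q (h : Setting μ K g F X δ M Q) (n : ℕ) : ∀ θ η,
    IdentDistrib (fun ω x a => Q n θ x a ω) (fun ω x a => Q n η x a ω) μ μ := by
  induction n using Nat.strong_induction_on with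
  | _ n ih =>
    intro θ η
    have h1 := h.identDistrib_sum (fun p => δ * ((M : ℝ) ^ (n - p.1))⁻¹) θ η (idx M n)
      fun p hp k hk => ih k (by
        simp only [idx, Finset.mem_biUnion, Finset.mem_range, Finset.mem_image] at hp
        obtain ⟨l, hl, i, _, rfl⟩ := hp
        exact lt_of_le_of_lt hk hl)
    have h2 := h1.comp (u := fun w x a => g x a + w x a)
      (measurable_pi_lambda _ fun x => measurable_pi_lambda _ fun a =>
        (measurable_eval x a).const_add _)
    simp_rw [h.Q_eq_sum_idx]
    exact h2

/-- The mean of the maximum of an iterate at a transition with an admissible index does not depend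
on the indices; this makes the multilevel sum telescope in expectation. -/
lemma integral_max_Q_eq (h : Setting μ K g F X δ M Q) (l : ℕ) {θ₁ θ₂ η₁ η₂ : List ℤ}
    (hθ : θ₂ ∉ desc θ₁) (hη : η₂ ∉ desc η₁) (x : E) (a : A) :
    ∫ ω, ⨆ b, Q l θ₁ (X θ₂ x a ω) b ω ∂μ = ∫ ω, ⨆ b, Q l η₁ (X η₂ x a ω) b ω ∂μ := by
  have hm : ∀ θ, @Measurable (E × Ω) ℝ (MeasurableSpace.prod inferInstance (sig F (desc θ))) _
      fun p => ⨆ b, Q l θ p.1 b p.2 := fun θ =>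
    @Measurable.iSup _ _ _ _ _ (MeasurableSpace.prod inferInstance (sig F (desc θ))) _ _ _ _ _ _
      fun b => h.measurable_Q_sig subset_rfl l b
  have hU := (h.identDistrib_Q l θ₁ η₁).comp (u := fun w x => ⨆ b, w x b)
      (measurable_pi_lambda _ fun x => Measurable.iSup fun b =>
        measurable_eval x b)
  have := identDistrib_comp (h.F_le θ₂) (h.sig_le (desc θ₁)) (h.F_le η₂) (h.sig_le (desc η₁))
    (h.indep_F_sig hθ) (h.indep_F_sig hη) (h.measurable_X_apply θ₂) (h.measurable_X_apply η₂)
    (hm θ₁) (hm η₁) (h.X_id _ _) hU.map_eq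
  exact (this.comp (u := fun w => w x a) (measurable_eval x a)).integral_eq

end Setting
end Setting

/-! ### The Bellman equation -/

section Bellman
variable {E A Ω : Type*} [MeasurableSpace E] [Fintype A] [Nonempty A] [mΩ : MeasurableSpace Ω]
  {μ : Measure Ω} [IsProbabilityMeasure μ] {K : ℝ} {g : E → A → ℝ} {Y : E → A → Ω → E} {δ : ℝ}

/-- The Bellman operator with reward `g`, discount factor `δ` and transitions `Y`. -/
noncomputable def bell (μ : Measure Ω) (g : E → A → ℝ) (δ : ℝ) (Y : E → A → Ω → E)
    (v : E → A → ℝ) (x : E) (a : A) : ℝ :=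
  g x a + δ * ∫ ω, ⨆ b, v (Y x a ω) b ∂μ

lemma measurable_bell (hg : ∀ a, Measurable fun x => g x a)
    (hY : ∀ a, Measurable fun p : E × Ω => Y p.1 a p.2) {v : E → A → ℝ}
    (hv : ∀ a, Measurable fun x => v x a) (a : A) : Measurable fun x => bell μ g δ Y v x a := by
  have h1 : Measurable fun p : E × Ω => ⨆ b, v (Y p.1 a p.2) b :=
    Measurable.iSup fun b => (hv b).comp (hY a)
  exact (hg a).add ((h1.stronglyMeasurable.integral_prod_right' (ν := μ)).measurable.const_mul δ)

lemma measurable_max_comp (hY : ∀ a, Measurable fun p : E × Ω => Y p.1 a p.2) {v : E → A → ℝ}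
    (hv : ∀ a, Measurable fun x => v x a) (x : E) (a : A) :
    Measurable fun ω => ⨆ b, v (Y x a ω) b :=
  Measurable.iSup fun b => (hv b).comp ((hY a).comp measurable_prodMk_left)

lemma integrable_max_comp (hY : ∀ a, Measurable fun p : E × Ω => Y p.1 a p.2) {v : E → A → ℝ}
    (hv : ∀ a, Measurable fun x => v x a) {C : ℝ} (hC : ∀ x a, |v x a| ≤ C) (x : E) (a : A) :
    Integrable (fun ω => ⨆ b, v (Y x a ω) b) μ :=
  Integrable.of_bound (measurable_max_comp hY hv x a).aestronglyMeasurable C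
    (Filter.Eventually.of_forall fun _ => abs_ciSup_le _ fun b => hC _ b)

lemma abs_bell_sub_le (hδ : 0 ≤ δ) (hY : ∀ a, Measurable fun p : E × Ω => Y p.1 a p.2)
    {u v : E → A → ℝ} (hu : ∀ a, Measurable fun x => u x a) (hv : ∀ a, Measurable fun x => v x a)
    {C C' c : ℝ} (hC : ∀ x a, |u x a| ≤ C) (hC' : ∀ x a, |v x a| ≤ C')
    (hc : ∀ x a, |u x a - v x a| ≤ c) (x : E) (a : A) :
    |bell μ g δ Y u x a - bell μ g δ Y v x a| ≤ δ * c := by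
  have h1 : bell μ g δ Y u x a - bell μ g δ Y v x a =
      δ * ∫ ω, ((⨆ b, u (Y x a ω) b) - ⨆ b, v (Y x a ω) b) ∂μ := by
    rw [integral_sub (integrable_max_comp hY hu hC x a) (integrable_max_comp hY hv hC' x a)]
    unfold bell
    ring
  rw [h1, abs_mul, abs_of_nonneg hδ]
  refine mul_le_mul_of_nonneg_left ?_ hδ
  have := norm_integral_le_of_norm_le_const (μ := μ) (C := c)
    (f := fun ω => (⨆ b, u (Y x a ω) b) - ⨆ b, v (Y x a ω) b)
    (Filter.Eventually.of_forall fun ω =>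
      (abs_ciSup_sub_le _ _).trans (ciSup_le fun b => hc _ b))
  simpa using this

lemma bellman_unique (hδ : 0 ≤ δ) (hδ1 : δ < 1)
    (hY : ∀ a, Measurable fun p : E × Ω => Y p.1 a p.2)
    {u v : E → A → ℝ} (hu : ∀ a, Measurable fun x => u x a) (hv : ∀ a, Measurable fun x => v x a)
    {C C' : ℝ} (hC : ∀ x a, |u x a| ≤ C) (hC' : ∀ x a, |v x a| ≤ C')
    (hu' : ∀ x a, u x a = bell μ g δ Y u x a) (hv' : ∀ x a, v x a = bell μ g δ Y v x a) :
    u = v := by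
  have h1 : ∀ n : ℕ, ∀ x a, |u x a - v x a| ≤ δ ^ n * (C + C') := by
    intro n
    induction n with
    | zero =>
      intro x a
      have := abs_sub (u x a) (v x a)
      linarith [hC x a, hC' x a]
    | succ n ih =>
      intro x a
      rw [hu', hv', pow_succ', mul_assoc]
      exact abs_bell_sub_le hδ hY hu hv hC hC' ih x a
  funext x a
  have h2 : Filter.Tendsto (fun n : ℕ => δ ^ n * (C + C')) Filter.atTop (nhds (0 * (C + C'))) :=
    (tendsto_pow_atTop_nhds_zero_of_lt_one hδ hδ1).mul_const _
  rw [zero_mul] at h2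
  have h3 := ge_of_tendsto' h2 fun n => h1 n x a
  exact sub_eq_zero.1 (abs_eq_zero.1 (le_antisymm h3 (abs_nonneg _)))

lemma exists_bellman (hK : 0 ≤ K) (hδ : 0 ≤ δ) (hδ1 : δ < 1)
    (hg : ∀ a, Measurable fun x => g x a) (hgK : ∀ x a, |g x a| ≤ K)
    (hY : ∀ a, Measurable fun p : E × Ω => Y p.1 a p.2) :
    ∃ q : E → A → ℝ, (∀ a, Measurable fun x => q x a) ∧ (∀ x a, |q x a| ≤ K / (1 - δ)) ∧
      ∀ x a, q x a = bell μ g δ Y q x a := by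
  have h1δ : 0 < 1 - δ := by linarith
  let v : ℕ → E → A → ℝ := fun n => (bell μ g δ Y)^[n] 0
  have v_succ : ∀ n, v (n + 1) = bell μ g δ Y (v n) := fun n => Function.iterate_succ_apply' _ _ _
  have v_meas : ∀ n a, Measurable fun x => v n x a := by
    intro n
    induction n with
    | zero => exact fun a => measurable_const
    | succ n ih => rw [v_succ]; exact measurable_bell hg hY ih
  have bell_zero : ∀ x a, bell μ g δ Y 0 x a = g x a := fun x a => by simp [bell]
  have v_bd : ∀ n x a, |v n x a| ≤ K / (1 - δ) := by
    intro n
    induction n with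
    | zero => intro x a; simpa [v] using div_nonneg hK h1δ.le
    | succ n ih =>
      intro x a
      have h1 := abs_bell_sub_le (μ := μ) (g := g) (u := v n) (v := 0) hδ hY (v_meas n)
        (fun a => measurable_const) ih (C' := 0) (by simp) (by simpa using ih) x a
      rw [v_succ]
      have h2 := abs_sub_abs_le_abs_sub (bell μ g δ Y (v n) x a) (bell μ g δ Y 0 x a)
      rw [bell_zero] at h1 h2
      have h3 : K / (1 - δ) = δ * (K / (1 - δ)) + K := by field_simp; ring
      linarith [hgK x a]
  have v_diff : ∀ n x a, |v (n + 1) x a - v n x a| ≤ K * δ ^ n := by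
    intro n
    induction n with
    | zero => intro x a; rw [v_succ]; simpa [v, bell_zero] using hgK x a
    | succ n ih =>
      intro x a
      have := abs_bell_sub_le (μ := μ) (g := g) hδ hY (v_meas (n + 1)) (v_meas n) (v_bd _) (v_bd _)
        ih x a
      rw [← v_succ, ← v_succ] at this
      calc _ ≤ _ := this
        _ = _ := by ring
  have v_dist : ∀ x a n, dist (v n x a) (v (n + 1) x a) ≤ K * δ ^ n := fun x a n => by
    rw [dist_comm]; exact v_diff n x a
  have v_lim : ∀ x a, ∃ z, Filter.Tendsto (fun n => v n x a) Filter.atTop (nhds z) := fun x a =>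
    cauchySeq_tendsto_of_complete (cauchySeq_of_le_geometric δ K hδ1 (v_dist x a))
  choose q hq using v_lim
  have q_meas : ∀ a, Measurable fun x => q x a := fun a =>
    measurable_of_tendsto_metrizable (fun n => v_meas n a) (tendsto_pi_nhds.2 fun x => hq x a)
  have q_bd : ∀ x a, |q x a| ≤ K / (1 - δ) := fun x a =>
    le_of_tendsto' (hq x a).abs fun n => v_bd n x a
  have q_dist : ∀ n x a, |v n x a - q x a| ≤ K * δ ^ n / (1 - δ) := fun n x a =>
    dist_le_of_le_geometric_of_tendsto δ K hδ1 (v_dist x a) (hq x a) n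
  refine ⟨q, q_meas, q_bd, fun x a => ?_⟩
  refine tendsto_nhds_unique ((Filter.tendsto_add_atTop_iff_nat 1).2 (hq x a)) ?_
  simp only [v_succ]
  rw [tendsto_iff_dist_tendsto_zero]
  refine squeeze_zero (fun _ => dist_nonneg) (g := fun n => δ * (K * δ ^ n / (1 - δ)))
    (fun n => abs_bell_sub_le hδ hY (v_meas n) q_meas (v_bd n) q_bd (q_dist n) x a) ?_
  have := (((tendsto_pow_atTop_nhds_zero_of_lt_one hδ hδ1).const_mul K).div_const
    (1 - δ)).const_mul δ
  simpa using this

end Bellman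

/-! ### The recursive `L²` error estimate -/

section ErrorAux
variable {E A Ω : Type*} [MeasurableSpace E] [Fintype A] [Nonempty A]

/-- The error of the `l`-th iterate at the state `y`, maximised over the actions. -/
noncomputable def err (q : E → A → ℝ) (Q : ℕ → List ℤ → E → A → Ω → ℝ) (l : ℕ) (θ : List ℤ)
    (y : E) (ω : Ω) : ℝ := ⨆ b, |q y b - Q l θ y b ω|

lemma measurable_pair {E S T β : Type*} [MeasurableSpace E] [MeasurableSpace S] [MeasurableSpace T]
    [MeasurableSpace β] {U : E → T → β} {Y : S → E}
    (hU : Measurable fun p : E × T => U p.1 p.2) (hY : Measurable Y) :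
    Measurable fun p : S × T => U (Y p.1) p.2 :=
  hU.comp ((hY.comp measurable_fst).prodMk measurable_snd)

lemma measurable_err_aux {m : MeasurableSpace Ω} {Q : ℕ → List ℤ → E → A → Ω → ℝ} {q : E → A → ℝ}
    (hq : ∀ a, Measurable fun x => q x a)
    {l : ℕ} {θ : List ℤ} (h : ∀ a, Measurable fun p : E × Ω => Q l θ p.1 a p.2) :
    Measurable fun p : E × Ω => err q Q l θ p.1 p.2 :=
  Measurable.iSup fun b => continuous_abs.measurable.comp
    (((hq b).comp measurable_fst).sub (h b))

end ErrorAux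

section Error
variable {E A Ω : Type*} [MeasurableSpace E] [Fintype A] [Nonempty A] [mΩ : MeasurableSpace Ω]
  {μ : Measure Ω} [IsProbabilityMeasure μ] {K : ℝ} {g : E → A → ℝ}
  {F : List ℤ → MeasurableSpace Ω} {X : List ℤ → E → A → Ω → E} {δ : ℝ} {M : ℕ}
  {Q : ℕ → List ℤ → E → A → Ω → ℝ}

namespace Setting

/-- An `L²` bound for the error that is uniform over states carries over to the error at an
independent random state. -/
lemma eLpNorm_err_comp (h : Setting μ K g F X δ M Q) {q : E → A → ℝ}
    (hq : ∀ a, Measurable fun x => q x a) {l : ℕ} {e : ℝ} (he : 0 ≤ e)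
    (ih : ∀ θ y, eLpNorm (err q Q l θ y) 2 μ ≤ ENNReal.ofReal e) {θ₁ θ₂ : List ℤ}
    (hθ : θ₂ ∉ desc θ₁) (x : E) (a : A) :
    eLpNorm (fun ω => err q Q l θ₁ (X θ₂ x a ω) ω) 2 μ ≤ ENNReal.ofReal e := by
  rw [eLpNorm_two_le_iff _ he]
  have hm : @Measurable (E × Ω) ℝ (MeasurableSpace.prod inferInstance (sig F (desc θ₁))) _
      fun p => err q Q l θ₁ p.1 p.2 :=
    @measurable_err_aux E A Ω _ _ _ (sig F (desc θ₁)) Q q hq l θ₁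
      fun b => h.measurable_Q_sig subset_rfl l b
  have hm' : @Measurable (E × Ω) ENNReal (MeasurableSpace.prod inferInstance (sig F (desc θ₁))) _
      fun p => ENNReal.ofReal (err q Q l θ₁ p.1 p.2 ^ 2) :=
    (ENNReal.measurable_ofReal.comp (measurable_id.pow_const 2)).comp hm
  have hp := @measurable_pair E Ω Ω ENNReal _ (F θ₂) (sig F (desc θ₁)) _
    (fun y ω => ENNReal.ofReal (err q Q l θ₁ y ω ^ 2)) (X θ₂ x a) hm' (h.measurable_X_apply θ₂ x a)
  rw [lintegral_diag (h.F_le θ₂) (h.sig_le (desc θ₁)) (h.indep_F_sig hθ)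
    (f := fun p => ENNReal.ofReal (err q Q l θ₁ (X θ₂ x a p.1) p.2 ^ 2)) hp]
  calc _ ≤ ∫⁻ _, ENNReal.ofReal (e ^ 2) ∂μ :=
        lintegral_mono fun ω' => (eLpNorm_two_le_iff _ he).1 (ih θ₁ (X θ₂ x a ω'))
    _ = _ := by simp

lemma measurable_err_comp (h : Setting μ K g F X δ M Q) {q : E → A → ℝ}
    (hq : ∀ a, Measurable fun x => q x a) (l : ℕ) (θ₁ θ₂ : List ℤ) (x : E) (a : A) :
    Measurable (fun ω => err q Q l θ₁ (X θ₂ x a ω) ω) :=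
  (measurable_err_aux hq fun b => h.measurable_Q l θ₁ b).comp
    (((h.measurable_X θ₂ a).comp measurable_prodMk_left).prodMk measurable_id)

lemma measurable_max_Q_comp (h : Setting μ K g F X δ M Q) (l : ℕ) (θ₁ θ₂ : List ℤ) (x : E)
    (a : A) : Measurable (fun ω => ⨆ b, Q l θ₁ (X θ₂ x a ω) b ω) :=
  Measurable.iSup fun b => (h.measurable_Q l θ₁ b).comp
    (((h.measurable_X θ₂ a).comp measurable_prodMk_left).prodMk measurable_id)

lemma eLpNorm_max_Q_sub (h : Setting μ K g F X δ M Q) {q : E → A → ℝ}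
    (hq : ∀ a, Measurable fun x => q x a) {l : ℕ} {e : ℝ} (he : 0 ≤ e)
    (ih : ∀ θ y, eLpNorm (err q Q l θ y) 2 μ ≤ ENNReal.ofReal e) {θ₁ θ₂ : List ℤ}
    (hθ : θ₂ ∉ desc θ₁) (x : E) (a : A) :
    eLpNorm (fun ω => (⨆ b, q (X θ₂ x a ω) b) - ⨆ b, Q l θ₁ (X θ₂ x a ω) b ω) 2 μ ≤
      ENNReal.ofReal e :=
  (eLpNorm_mono_real fun _ => abs_ciSup_sub_le _ _).trans (h.eLpNorm_err_comp hq he ih hθ x a)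

lemma integrable_max_Q_comp (h : Setting μ K g F X δ M Q) {q : E → A → ℝ}
    (hq : ∀ a, Measurable fun x => q x a) {C : ℝ} (hC : ∀ x a, |q x a| ≤ C) {l : ℕ} {e : ℝ}
    (he : 0 ≤ e)
    (ih : ∀ θ y, eLpNorm (err q Q l θ y) 2 μ ≤ ENNReal.ofReal e) {θ₁ θ₂ : List ℤ}
    (hθ : θ₂ ∉ desc θ₁) (x : E) (a : A) :
    Integrable (fun ω => ⨆ b, Q l θ₁ (X θ₂ x a ω) b ω) μ := by
  have h1 := integrable_max_comp (μ := μ) (h.measurable_X θ₂) hq hC x a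
  have h2 : MemLp (fun ω => (⨆ b, q (X θ₂ x a ω) b) - ⨆ b, Q l θ₁ (X θ₂ x a ω) b ω) 2 μ :=
    ⟨((measurable_max_comp (h.measurable_X θ₂) hq x a).sub
      (h.measurable_max_Q_comp l θ₁ θ₂ x a)).aestronglyMeasurable,
      (h.eLpNorm_max_Q_sub hq he ih hθ x a).trans_lt ENNReal.ofReal_lt_top⟩
  refine (h1.sub (h2.integrable one_le_two)).congr (Filter.Eventually.of_forall fun ω => ?_)
  simp

lemma not_mem_desc_term (θ : List ℤ) (s t i : ℤ) : θ ++ [s, i] ∉ desc (θ ++ [t, i]) :=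
  not_mem_desc_of_length (by simp)

lemma eLpNorm_term (h : Setting μ K g F X δ M Q) {q : E → A → ℝ}
    (hq : ∀ a, Measurable fun x => q x a) {e : ℕ → ℝ} (he : ∀ l, 0 ≤ e l) {p : ℕ × ℕ} {w : ℝ}
    (hw0 : p.1 = 0 → K ≤ w) (hw : p.1 ≠ 0 → e p.1 + e (p.1 - 1) ≤ w)
    (ih : ∀ l ≤ p.1, ∀ θ y, eLpNorm (err q Q l θ y) 2 μ ≤ ENNReal.ofReal (e l)) (θ : List ℤ)
    (x : E) (a : A) : eLpNorm (term X Q θ p x a) 2 μ ≤ ENNReal.ofReal w := by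
  by_cases hp : p.1 = 0
  · refine eLpNorm_two_le_const _ fun ω => ?_
    refine le_trans ?_ (hw0 hp)
    unfold term fld
    rw [if_pos hp, sub_zero]
    refine abs_ciSup_le _ fun b => ?_
    rw [h.Q_rec, hp]
    simpa using h.g_bd _ b
  · refine le_trans ?_ (ENNReal.ofReal_le_ofReal (hw hp))
    refine le_trans (eLpNorm_mono_real fun ω => ?_) (eLpNorm_two_add_le
      (h.measurable_err_comp hq p.1 (θ ++ [(p.1 : ℤ), (p.2 : ℤ) + 1])
        (θ ++ [(p.1 : ℤ), (p.2 : ℤ) + 1]) x a)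
      (h.measurable_err_comp hq (p.1 - 1) (θ ++ [-(p.1 : ℤ), (p.2 : ℤ) + 1])
        (θ ++ [(p.1 : ℤ), (p.2 : ℤ) + 1]) x a) (he _) (he _)
      (h.eLpNorm_err_comp hq (he _) (ih p.1 le_rfl) (not_mem_desc_term _ _ _ _) x a)
      (h.eLpNorm_err_comp hq (he _) (ih (p.1 - 1) (by omega)) (not_mem_desc_term _ _ _ _) x a))
    unfold term fld err
    rw [if_neg hp, Real.norm_eq_abs]
    set y := X (θ ++ [(p.1 : ℤ), (p.2 : ℤ) + 1]) x a ω
    have h1 := abs_ciSup_sub_le (q y) (fun b => Q p.1 (θ ++ [(p.1 : ℤ), (p.2 : ℤ) + 1]) y b ω)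
    have h2 := abs_ciSup_sub_le (q y)
      (fun b => Q (p.1 - 1) (θ ++ [-(p.1 : ℤ), (p.2 : ℤ) + 1]) y b ω)
    rw [abs_sub_comm] at h1
    exact (abs_sub_le _ (⨆ b, q y b) _).trans (add_le_add h1 h2)

lemma integral_term (h : Setting μ K g F X δ M Q) {q : E → A → ℝ}
    (hq : ∀ a, Measurable fun x => q x a) {C : ℝ} (hC : ∀ x a, |q x a| ≤ C) {e : ℕ → ℝ}
    (he : ∀ l, 0 ≤ e l) {p : ℕ × ℕ}
    (ih : ∀ l ≤ p.1, ∀ θ y, eLpNorm (err q Q l θ y) 2 μ ≤ ENNReal.ofReal (e l)) (θ : List ℤ)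
    (x : E) (a : A) : ∫ ω, term X Q θ p x a ω ∂μ =
      (∫ ω, ⨆ b, Q p.1 [0] (X [0] x a ω) b ω ∂μ) -
        if p.1 = 0 then 0 else ∫ ω, ⨆ b, Q (p.1 - 1) [0] (X [0] x a ω) b ω ∂μ := by
  have h0 : ([0] : List ℤ) ∉ desc [0] := not_mem_desc_of_length le_rfl
  unfold term fld
  by_cases hp : p.1 = 0
  · simp only [if_pos hp, sub_zero]
    exact h.integral_max_Q_eq p.1 (not_mem_desc_term _ _ _ _) h0 x a
  · simp only [if_neg hp]
    rw [integral_sub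
      (h.integrable_max_Q_comp hq hC (he _) (ih p.1 le_rfl) (not_mem_desc_term _ _ _ _) x a)
      (h.integrable_max_Q_comp hq hC (he _) (ih (p.1 - 1) (by omega))
        (not_mem_desc_term _ _ _ _) x a),
      h.integral_max_Q_eq p.1 (not_mem_desc_term θ (p.1 : ℤ) (p.1 : ℤ) _) h0 x a,
      h.integral_max_Q_eq (p.1 - 1) (not_mem_desc_term θ (p.1 : ℤ) (-(p.1 : ℤ)) _) h0 x a]

/-- The statistical error of the Monte Carlo average of level `l`; the summands are independent,
so their variances add up. -/
lemma eLpNorm_average (h : Setting μ K g F X δ M Q) {l m : ℕ} (hm : 0 < m) {w r : ℝ} (hw : 0 ≤ w)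
    (hr : 0 ≤ r) (hrm : r ^ 2 = (m : ℝ)⁻¹) {θ : List ℤ} {x : E} {a : A} {c : ℝ}
    (hE : ∀ i, ∫ ω, term X Q θ (l, i) x a ω ∂μ = c)
    (hL : ∀ i, eLpNorm (term X Q θ (l, i) x a) 2 μ ≤ ENNReal.ofReal w) :
    eLpNorm (fun ω => (m : ℝ)⁻¹ * ∑ i ∈ Finset.range m, term X Q θ (l, i) x a ω - c) 2 μ ≤
      ENNReal.ofReal (r * w) := by
  have hm' : (m : ℝ) ≠ 0 := by positivity
  have hL2 : ∀ i, MemLp (term X Q θ (l, i) x a) 2 μ := fun i =>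
    ⟨(h.measurable_term' θ _ x a).aestronglyMeasurable, (hL i).trans_lt ENNReal.ofReal_lt_top⟩
  have hS : MemLp (fun ω => ∑ i ∈ Finset.range m, term X Q θ (l, i) x a ω) 2 μ :=
    memLp_finsetSum _ fun i _ => hL2 i
  have hI : ∫ ω, (m : ℝ)⁻¹ * ∑ i ∈ Finset.range m, term X Q θ (l, i) x a ω ∂μ = c := by
    rw [integral_const_mul, integral_finsetSum _ fun i _ => (hL2 i).integrable one_le_two]
    simp [hE, hm']
  have hV : Var[fun ω => ∑ i ∈ Finset.range m, term X Q θ (l, i) x a ω; μ] =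
      ∑ i ∈ Finset.range m, Var[term X Q θ (l, i) x a; μ] := by
    rw [← IndepFun.variance_sum (fun i _ => hL2 i)]
    · congr 1
      ext ω
      simp
    · intro i _ j _ hij
      exact h.indepFun_of_sig (disjoint_blk θ (by simpa using hij)) (h.measurable_term θ _ x a)
        (h.measurable_term θ _ x a)
  have hV' : Var[fun ω => (m : ℝ)⁻¹ * ∑ i ∈ Finset.range m, term X Q θ (l, i) x a ω; μ] ≤
      (r * w) ^ 2 := by
    rw [variance_const_mul, hV]
    calc _ ≤ ((m : ℝ)⁻¹) ^ 2 * ∑ i ∈ Finset.range m, w ^ 2 :=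
          mul_le_mul_of_nonneg_left (Finset.sum_le_sum fun i _ =>
            variance_le_of_eLpNorm (h.measurable_term' θ _ x a) hw (hL i)) (sq_nonneg _)
      _ = (r * w) ^ 2 := by
          rw [mul_pow, hrm, Finset.sum_const, Finset.card_range, nsmul_eq_mul]
          field_simp
  have := eLpNorm_sub_integral_le (hS.const_mul ((m : ℝ)⁻¹)) (mul_nonneg hr hw) hV'
  rwa [hI] at this

/-- One step of the error recursion: the bias contracts by `δ`, and level `l` contributes a
statistical error with Monte Carlo factor `r ^ (n - l)`, where `r = M ^ (-1/2)`. -/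
lemma eLpNorm_err_step (h : Setting μ K g F X δ M Q) {q : E → A → ℝ}
    (hq : ∀ a, Measurable fun x => q x a) {C : ℝ} (hC : ∀ x a, |q x a| ≤ C)
    (hqB : ∀ x a, q x a = bell μ g δ (X [0]) q x a) {e w : ℕ → ℝ} (he : ∀ l, 0 ≤ e l)
    (hw : ∀ l, 0 ≤ w l) {n : ℕ} (hw0 : K ≤ w 0)
    (hew : ∀ l, l ≠ 0 → e l + e (l - 1) ≤ w l)
    (ih : ∀ l ≤ n, ∀ θ y, eLpNorm (err q Q l θ y) 2 μ ≤ ENNReal.ofReal (e l)) {r : ℝ}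
    (hr : 0 ≤ r) (hrM : r ^ 2 = (M : ℝ)⁻¹) (θ : List ℤ) (x : E) :
    eLpNorm (err q Q (n + 1) θ x) 2 μ ≤ ENNReal.ofReal (δ * (e n +
      ∑ l ∈ Finset.range (n + 1), (Fintype.card A : ℝ) * (r ^ (n + 1 - l) * w l))) := by
  have hδ := h.δ_nonneg
  have h0 : ([0] : List ℤ) ∉ desc [0] := not_mem_desc_of_length le_rfl
  let P : A → ℕ → ℝ := fun a l => ∫ ω, ⨆ b, Q l [0] (X [0] x a ω) b ω ∂μ
  let c : A → ℕ → ℝ := fun a l => P a l - if l = 0 then 0 else P a (l - 1)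
  let Z : ℕ → A → Ω → ℝ := fun l a ω =>
    ((M ^ (n + 1 - l) : ℕ) : ℝ)⁻¹ * ∑ i ∈ Finset.range (M ^ (n + 1 - l)), term X Q θ (l, i) x a ω
      - c a l
  have hsum : ∀ a k, ∑ l ∈ Finset.range (k + 1), c a l = P a k := by
    intro a k
    induction k with
    | zero => simp [c]
    | succ k ihk => rw [Finset.sum_range_succ, ihk]; simp [c]
  have hZm : ∀ l a, Measurable (Z l a) := fun l a =>
    ((Finset.measurable_sum _ fun i _ => h.measurable_term' θ (l, i) x a).const_mul _).sub_const _
  have hZ : ∀ l ∈ Finset.range (n + 1), ∀ a,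
      eLpNorm (Z l a) 2 μ ≤ ENNReal.ofReal (r ^ (n + 1 - l) * w l) := by
    intro l hl a
    have hl' : l ≤ n := by simpa [Nat.lt_succ_iff] using hl
    refine h.eLpNorm_average (pow_pos h.M_pos _) (hw l) (pow_nonneg hr _) ?_ ?_ ?_
    · rw [← pow_mul, mul_comm, pow_mul, hrM]; push_cast; rw [inv_pow]
    · exact fun i => h.integral_term hq hC he (p := (l, i))
        (fun k hk => ih k (le_trans hk hl')) θ x a
    · exact fun i => h.eLpNorm_term hq he (p := (l, i)) (fun hp => by
        simp only at hp; subst hp; exact hw0) (fun hp => hew l hp)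
        (fun k hk => ih k (le_trans hk hl')) θ x a
  have hbias : ∀ a, |(∫ ω, ⨆ b, q (X [0] x a ω) b ∂μ) - P a n| ≤ e n := fun a => by
    rw [← integral_sub (integrable_max_comp (h.measurable_X [0]) hq hC x a)
      (h.integrable_max_Q_comp hq hC (he n) (ih n le_rfl) h0 x a)]
    exact abs_integral_le_of_eLpNorm ((measurable_max_comp (h.measurable_X _) hq x a).sub
      (h.measurable_max_Q_comp n _ _ x a)) (he n)
      (h.eLpNorm_max_Q_sub hq (he n) (ih n le_rfl) h0 x a)
  have hpt : ∀ ω a, q x a - Q (n + 1) θ x a ω =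
      δ * (((∫ ω, ⨆ b, q (X [0] x a ω) b ∂μ) - P a n) - ∑ l ∈ Finset.range (n + 1), Z l a ω) := by
    intro ω a
    rw [hqB, h.Q_rec, bell]
    simp only [Z]
    rw [Finset.sum_sub_distrib, hsum]
    simp only [mul_assoc]
    rw [← Finset.mul_sum]
    push_cast
    ring
  have hle : ∀ ω, ‖err q Q (n + 1) θ x ω‖ ≤ δ * (e n +
      ∑ l ∈ Finset.range (n + 1), ∑ a, |Z l a ω|) := by
    intro ω
    have h1 : 0 ≤ err q Q (n + 1) θ x ω := ciSup_abs_nonneg _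
    rw [Real.norm_of_nonneg h1]
    refine ciSup_le fun a => ?_
    rw [hpt, abs_mul, abs_of_nonneg hδ]
    refine mul_le_mul_of_nonneg_left ?_ hδ
    refine (abs_sub _ _).trans (add_le_add (hbias a) ?_)
    refine (Finset.abs_sum_le_sum_abs _ _).trans (Finset.sum_le_sum fun l _ => ?_)
    exact Finset.single_le_sum (f := fun a => |Z l a ω|) (fun _ _ => abs_nonneg _)
      (Finset.mem_univ a)
  refine (eLpNorm_mono_real hle).trans (eLpNorm_two_const_mul_le hδ ?_)
  have habs : ∀ l a, Measurable fun ω => |Z l a ω| := fun l a =>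
    continuous_abs.measurable.comp (hZm l a)
  have hnn : ∀ l, 0 ≤ r ^ (n + 1 - l) * w l := fun l => mul_nonneg (pow_nonneg hr _) (hw l)
  have hnn' : ∀ l, 0 ≤ (Fintype.card A : ℝ) * (r ^ (n + 1 - l) * w l) := fun l =>
    mul_nonneg (Nat.cast_nonneg _) (hnn l)
  refine eLpNorm_two_add_le measurable_const
    (Finset.measurable_sum _ fun l _ => Finset.measurable_sum _ fun a _ => habs l a) (he n)
    (Finset.sum_nonneg fun l _ => hnn' l)
    (eLpNorm_two_le_const _ fun _ => (abs_of_nonneg (he n)).le) ?_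
  refine eLpNorm_two_sum_le _ (fun l _ => Finset.measurable_sum _ fun a _ => habs l a)
    (fun l _ => hnn' l) fun l hl => ?_
  refine (eLpNorm_two_sum_le _ (b := fun _ => r ^ (n + 1 - l) * w l) (fun a _ => habs l a)
    (fun _ _ => hnn l) fun a _ => ?_).trans (le_of_eq ?_)
  · exact (eLpNorm_mono_real fun ω => by simp).trans
      ((eLpNorm_norm (Z l a)).le.trans (hZ l hl a))
  · simp

end Setting
end Error

/-! ### Geometric convergence of the iterates -/

/-- The rate `ρ` exists because at `ρ = 1` the left-hand side equals
`D (1 + (1 - D) / (1 - r))`, which is less than `1` as soon as `r < 1 - D = 2 a r`. -/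
lemma exists_rate {a r D : ℝ} (ha : 1 ≤ a) (hr : 0 < r) (hD : D = 1 - 2 * a * r) (hD0 : 0 ≤ D) :
    ∃ ρ, r < ρ ∧ ρ < 1 ∧ D / ρ + D * a * r * (1 + 1 / ρ) / (ρ - r) ≤ 1 := by
  have hs : r < 2 * a * r := by nlinarith
  have hr1 : r < 1 := by linarith
  have h1r : 0 < 1 - r := by linarith
  have hc : ContinuousAt (fun ρ => D / ρ + D * a * r * (1 + 1 / ρ) / (ρ - r)) (1 : ℝ) := by
    refine ContinuousAt.add (continuousAt_const.div continuousAt_id one_ne_zero) ?_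
    refine ContinuousAt.div ?_ (continuousAt_id.sub continuousAt_const) h1r.ne'
    exact continuousAt_const.mul
      (continuousAt_const.add (continuousAt_const.div continuousAt_id one_ne_zero))
  have h1 : D / 1 + D * a * r * (1 + 1 / 1) / (1 - r) < 1 := by
    rw [div_one, div_one, ← sub_pos]
    have : 1 - (D + D * a * r * (1 + 1) / (1 - r)) = 2 * a * r * (2 * a * r - r) / (1 - r) := by
      rw [hD]; field_simp; ring
    rw [this]
    exact div_pos (mul_pos (by linarith) (by linarith)) h1r
  have h2 : ∀ᶠ ρ in nhdsWithin (1 : ℝ) (Set.Iio 1),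
      D / ρ + D * a * r * (1 + 1 / ρ) / (ρ - r) < 1 :=
    (hc.eventually_lt continuousAt_const h1).filter_mono nhdsWithin_le_nhds
  have h3 : ∀ᶠ ρ in nhdsWithin (1 : ℝ) (Set.Iio 1), r < ρ :=
    (eventually_gt_nhds hr1).filter_mono nhdsWithin_le_nhds
  obtain ⟨ρ, h4, h5, h6⟩ := (h2.and (h3.and self_mem_nhdsWithin)).exists
  exact ⟨ρ, h5, h6, h4.le⟩

lemma sum_geom_le {r ρ : ℝ} (hr : 0 ≤ r) (hρ : r < ρ) (n : ℕ) :
    ∑ l ∈ Finset.range n, r ^ (n - l) * ρ ^ l ≤ ρ ^ n * (r / (ρ - r)) := by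
  have h0 : 0 < ρ - r := by linarith
  induction n with
  | zero => simpa using div_nonneg hr h0.le
  | succ n ih =>
    have h1 : ∑ l ∈ Finset.range (n + 1), r ^ (n + 1 - l) * ρ ^ l =
        r * ∑ l ∈ Finset.range n, r ^ (n - l) * ρ ^ l + r * ρ ^ n := by
      rw [Finset.sum_range_succ, Finset.mul_sum]
      congr 1
      · refine Finset.sum_congr rfl fun l hl => ?_
        rw [Nat.succ_sub (Finset.mem_range.1 hl).le, pow_succ]
        ring
      · simp
    rw [h1]
    calc _ ≤ r * (ρ ^ n * (r / (ρ - r))) + r * ρ ^ n := by gcongr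
      _ = _ := by field_simp; ring

section Conv
variable {E A Ω : Type*} [MeasurableSpace E] [Fintype A] [Nonempty A] [mΩ : MeasurableSpace Ω]
  {μ : Measure Ω} [IsProbabilityMeasure μ] {K : ℝ} {g : E → A → ℝ}
  {F : List ℤ → MeasurableSpace Ω} {X : List ℤ → E → A → Ω → E} {δ : ℝ} {M : ℕ}
  {Q : ℕ → List ℤ → E → A → Ω → ℝ}

lemma Setting.eLpNorm_err_le (h : Setting μ K g F X δ M Q) {q : E → A → ℝ}
    (hq : ∀ a, Measurable fun x => q x a) {C : ℝ} (hC : ∀ x a, |q x a| ≤ C)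
    (hqB : ∀ x a, q x a = bell μ g δ (X [0]) q x a) {B D r ρ : ℝ} (hB : C + K ≤ B)
    (hKB : K ≤ B) (hB0 : 0 ≤ B) (hD : δ ≤ D) (hr : 0 < r) (hrM : r ^ 2 = (M : ℝ)⁻¹) (hrρ : r < ρ)
    (hrate : D / ρ + D * Fintype.card A * r * (1 + 1 / ρ) / (ρ - r) ≤ 1) (n : ℕ) :
    ∀ θ x, eLpNorm (err q Q n θ x) 2 μ ≤ ENNReal.ofReal (B * ρ ^ n) := by
  have hρ : 0 < ρ := hr.trans hrρ
  induction n using Nat.strong_induction_on with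
  | _ n ih =>
    intro θ x
    cases n with
    | zero =>
      refine eLpNorm_two_le_const _ fun ω => ?_
      rw [pow_zero, mul_one]
      refine abs_ciSup_le _ fun a => ?_
      rw [abs_abs, h.Q_rec]
      simp only [Finset.range_zero, Finset.sum_empty, add_zero]
      exact (abs_sub _ _).trans ((add_le_add (hC x a) (h.g_bd x a)).trans hB)
    | succ n =>
      have hw : ∀ l : ℕ, 0 ≤ B * ρ ^ l * (1 + 1 / ρ) := fun l => by positivity
      refine (h.eLpNorm_err_step hq hC hqB (e := fun l => B * ρ ^ l)
        (w := fun l => B * ρ ^ l * (1 + 1 / ρ)) (fun l => by positivity) hw ?_ ?_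
        (fun l hl => ih l (by omega)) hr.le hrM θ x).trans (ENNReal.ofReal_le_ofReal ?_)
      · have : 0 ≤ B * (1 / ρ) := by positivity
        simp only [pow_zero]
        linarith
      · rintro (_ | l) hl
        · exact absurd rfl hl
        · refine le_of_eq ?_
          simp only [Nat.add_sub_cancel]
          field_simp
          ring
      · have hsum : ∑ l ∈ Finset.range (n + 1), (Fintype.card A : ℝ) *
            (r ^ (n + 1 - l) * (B * ρ ^ l * (1 + 1 / ρ))) = Fintype.card A * B * (1 + 1 / ρ) *
              ∑ l ∈ Finset.range (n + 1), r ^ (n + 1 - l) * ρ ^ l := by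
          rw [Finset.mul_sum]
          exact Finset.sum_congr rfl fun l _ => by ring
        have h0 : 0 < ρ - r := by linarith
        have hD0 : 0 ≤ D := h.δ_nonneg.trans hD
        rw [hsum]
        calc _ ≤ D * (B * ρ ^ n + Fintype.card A * B * (1 + 1 / ρ) *
              (ρ ^ (n + 1) * (r / (ρ - r)))) := by
              gcongr
              exact sum_geom_le hr.le hrρ _
          _ = B * ρ ^ (n + 1) *
              (D / ρ + D * Fintype.card A * r * (1 + 1 / ρ) / (ρ - r)) := by
              field_simp
              ring
          _ ≤ B * ρ ^ (n + 1) * 1 := by gcongr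
          _ = _ := mul_one _

end Conv

/-! ### Cost and complexity -/

lemma cost_le {R : ℝ} (hR : 0 ≤ R) {M : ℕ} (hM : 1 ≤ M) {C : ℕ → ℝ}
    (hC : ∀ n, C n ≤ ∑ l ∈ Finset.range n, (M : ℝ) ^ (n - l) *
      (R + C l + if l = 0 then 0 else C (l - 1))) (n : ℕ) : C n ≤ R * (4 * M) ^ n := by
  have hM1 : (1 : ℝ) ≤ M := by exact_mod_cast hM
  have h4 : (1 : ℝ) ≤ 4 * M := by linarith
  induction n using Nat.strong_induction_on with
  | _ n ih =>
    have h1 : ∀ l ∈ Finset.range n, (M : ℝ) ^ (n - l) *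
        (R + C l + if l = 0 then 0 else C (l - 1)) ≤ R * M ^ n * (3 * 4 ^ l) := by
      intro l hl
      have hl := Finset.mem_range.1 hl
      have hone : R ≤ R * (4 * M) ^ l := le_mul_of_one_le_right hR (one_le_pow₀ h4)
      have h2 : (if l = 0 then 0 else C (l - 1)) ≤ R * (4 * M) ^ l := by
        split_ifs with h0
        · positivity
        · exact (ih (l - 1) (by omega)).trans
            (mul_le_mul_of_nonneg_left (pow_le_pow_right₀ h4 (Nat.sub_le _ _)) hR)
      calc _ ≤ (M : ℝ) ^ (n - l) * (3 * (R * (4 * M) ^ l)) := by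
            gcongr
            linarith [ih l hl]
        _ = R * ((M : ℝ) ^ (n - l) * M ^ l) * (3 * 4 ^ l) := by rw [mul_pow]; ring
        _ = _ := by rw [← pow_add, Nat.sub_add_cancel hl.le]
    have h3 : ∀ k : ℕ, ∑ l ∈ Finset.range k, (3 * 4 ^ l : ℝ) = 4 ^ k - 1 := by
      intro k
      induction k with
      | zero => simp
      | succ k ihk => rw [Finset.sum_range_succ, ihk]; ring
    refine (hC n).trans ((Finset.sum_le_sum h1).trans ?_)
    rw [← Finset.mul_sum, h3, mul_pow]
    have : 0 ≤ R * (M : ℝ) ^ n := by positivity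
    nlinarith

/-- If the error decays like `B ρ ^ n` and the cost grows like `κ ^ n`, then accuracy `ε` is
reached at polynomial cost: take the first `n` with `B ρ ^ n ≤ ε`, so that `ρ ^ (n - 1) > ε / B`,
and compare `κ` with a power of `ρ⁻¹`. -/
lemma exists_complexity {B ρ κ : ℝ} (hB : 1 ≤ B) (hρ : 0 < ρ) (hρ1 : ρ < 1) (hκ : 1 ≤ κ) :
    ∃ (N : ℝ → ℕ) (c : ℝ), ∀ ε : ℝ, 0 < ε → ε ≤ 1 →
      B * ρ ^ N ε ≤ ε ∧ κ ^ N ε ≤ c * ε ^ (-c) := by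
  classical
  have hex : ∀ ε : ℝ, 0 < ε → ∃ n : ℕ, B * ρ ^ n ≤ ε := fun ε hε => by
    obtain ⟨n, hn⟩ := exists_pow_lt_of_lt_one (div_pos hε (by linarith : 0 < B)) hρ1
    refine ⟨n, ?_⟩
    rw [lt_div_iff₀ (by linarith)] at hn
    linarith
  obtain ⟨s, hs⟩ := pow_unbounded_of_one_lt κ (one_lt_inv₀ hρ |>.2 hρ1)
  have hB0 : 0 < B := by linarith
  have hκB : 1 ≤ κ * B ^ s := one_le_mul_of_one_le_of_one_le hκ (one_le_pow₀ hB)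
  refine ⟨fun ε => if h : 0 < ε then Nat.find (hex ε h) else 0, max (κ * B ^ s) s,
    fun ε hε hε1 => ?_⟩
  simp only [dif_pos hε]
  refine ⟨Nat.find_spec (hex ε hε), ?_⟩
  have key : κ ^ Nat.find (hex ε hε) ≤ κ * (B / ε) ^ s := by
    have hBε : 1 ≤ B / ε := by rw [le_div_iff₀ hε]; linarith
    rcases hN : Nat.find (hex ε hε) with _ | m
    · rw [pow_zero]
      exact one_le_mul_of_one_le_of_one_le hκ (one_le_pow₀ hBε)
    · have hm : ε < B * ρ ^ m := not_le.1 (Nat.find_min (hex ε hε) (by omega))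
      have h1 : (ρ⁻¹) ^ m ≤ B / ε := by
        rw [le_div_iff₀ hε, inv_pow, inv_mul_le_iff₀ (by positivity)]
        linarith
      calc κ ^ (m + 1) = κ * κ ^ m := pow_succ' _ _
        _ ≤ κ * ((ρ⁻¹) ^ s) ^ m := by gcongr
        _ = κ * ((ρ⁻¹) ^ m) ^ s := by rw [← pow_mul, ← pow_mul, mul_comm s m]
        _ ≤ κ * (B / ε) ^ s := by gcongr
  have hpow : (ε ^ s)⁻¹ ≤ ε ^ (-(max (κ * B ^ s) (s : ℝ))) := by
    rw [← Real.rpow_natCast, ← Real.rpow_neg hε.le]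
    exact Real.rpow_le_rpow_of_exponent_ge hε hε1 (neg_le_neg (le_max_right _ _))
  calc _ ≤ κ * (B / ε) ^ s := key
    _ = (κ * B ^ s) * (ε ^ s)⁻¹ := by rw [div_pow]; ring
    _ ≤ _ := by
      gcongr
      exact le_max_left _ _

end MLFP

/-- Overcoming the curse of dimensionality for Bellman equations of Markov decision processes
(Theorem 1.1 of the paper).  For every dimension `d ∈ ℕ` consider an MDP on `ℝ^d` (modelled by
`Fin d → ℝ`) with finite action set `A`, uniformly bounded reward functions `g_d`, discount
factors `δ_d ∈ [0,1)`, one-step transitions given by i.i.d. random fields `X_d^θ` measurable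
with respect to independent σ-algebras `ℱ_d^θ`, `θ ∈ Θ = ⋃_n ℤ^n` (modelled by `List ℤ`, with
`(θ,l,i)` given by `θ ++ [l,i]` and the index `0` by `[0]`), a Monte Carlo parameter
`M ≥ sup_d 4|A|²(1 − δ_d)^{−2}`, MLFP approximations `𝒬_{d,n}^θ` and computational costs
`𝔠_{d,n}` satisfying the stated recursions.  Then (i) for every `d` the Bellman equation
`Q_d(x,a) = g_d(x,a) + δ_d E[max_b Q_d(X_d^{0,x,a},b)]` has a unique bounded measurable
solution `Q_d`, and (ii) there exist `N : (0,1] → ℕ` and `c ∈ ℝ` such that for all `d` and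
`ε ∈ (0,1]` one has `𝔠_{d,N_ε} ≤ c ℛ_d ε^{−c}` and
`sup_x (E[max_a |Q_d(x,a) − 𝒬_{d,N_ε}^0(x,a)|²])^{1/2} ≤ ε`. -/
theorem stmt18
    {A : Type*} [Fintype A] [Nonempty A]
    {Ω : Type*} [mΩ : MeasurableSpace Ω] (μ : Measure Ω) [IsProbabilityMeasure μ]
    (g : ∀ d : ℕ, (Fin d → ℝ) → A → ℝ)
    (hg_meas : ∀ (d : ℕ) (a : A), Measurable fun x => g d x a)
    (hg_bd : ∃ K : ℝ, ∀ (d : ℕ) (x : Fin d → ℝ) (a : A), |g d x a| ≤ K)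
    (F : ℕ → List ℤ → MeasurableSpace Ω)
    (hFsub : ∀ d θ, F d θ ≤ mΩ)
    (hFindep : ∀ d : ℕ, ProbabilityTheory.iIndep (F d) μ)
    (X : ∀ d : ℕ, List ℤ → (Fin d → ℝ) → A → Ω → (Fin d → ℝ))
    (hXmeas : ∀ (d : ℕ) (θ : List ℤ) (a : A),
      @Measurable ((Fin d → ℝ) × Ω) (Fin d → ℝ)
        ((inferInstance : MeasurableSpace (Fin d → ℝ)).prod (F d θ)) inferInstance
        fun p => X d θ p.1 a p.2)
    (hXid : ∀ (d : ℕ) (θ η : List ℤ),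
      Measure.map (fun ω => fun p : (Fin d → ℝ) × A => X d θ p.1 p.2 ω) μ
        = Measure.map (fun ω => fun p : (Fin d → ℝ) × A => X d η p.1 p.2 ω) μ)
    (δ R : ℕ → ℝ) (hδ0 : ∀ d, 0 ≤ δ d) (hδ1 : ∀ d, δ d < 1) (hR : ∀ d, 0 ≤ R d)
    (M : ℕ)
    (hM : ∀ d : ℕ, 4 * (Fintype.card A : ℝ) ^ 2 / (1 - δ d) ^ 2 ≤ (M : ℝ))
    (Q : ∀ d : ℕ, ℕ → List ℤ → (Fin d → ℝ) → A → Ω → ℝ)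
    (hQ : ∀ (d n : ℕ) (θ : List ℤ) (x : Fin d → ℝ) (a : A) (ω : Ω),
      Q d n θ x a ω = g d x a +
        ∑ l ∈ Finset.range n, (δ d * ((M : ℝ) ^ (n - l))⁻¹) *
          ∑ i ∈ Finset.range (M ^ (n - l)),
            ((⨆ b : A, Q d l (θ ++ [(l : ℤ), (i : ℤ) + 1])
                (X d (θ ++ [(l : ℤ), (i : ℤ) + 1]) x a ω) b ω)
              - if l = 0 then 0 else
                ⨆ b : A, Q d (l - 1) (θ ++ [-(l : ℤ), (i : ℤ) + 1])
                  (X d (θ ++ [(l : ℤ), (i : ℤ) + 1]) x a ω) b ω))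
    (C : ℕ → ℕ → ℝ) (hC_nonneg : ∀ d n, 0 ≤ C d n)
    (hC_rec : ∀ d n : ℕ,
      C d n ≤ ∑ l ∈ Finset.range n, (M : ℝ) ^ (n - l) *
        (R d + C d l + if l = 0 then 0 else C d (l - 1))) :
    ∃ q : ∀ d : ℕ, (Fin d → ℝ) → A → ℝ,
      (∀ d : ℕ,
        (((∀ a : A, Measurable fun x => q d x a) ∧
            (∃ K : ℝ, ∀ (y : Fin d → ℝ) (a : A), |q d y a| ≤ K)) ∧
          ∀ (x : Fin d → ℝ) (a : A),
            q d x a = g d x a + δ d * ∫ ω, ⨆ b : A, q d (X d ([0]) x a ω) b ∂μ) ∧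
        ∀ u : (Fin d → ℝ) → A → ℝ,
          (((∀ a : A, Measurable fun x => u x a) ∧
              (∃ K : ℝ, ∀ (y : Fin d → ℝ) (a : A), |u y a| ≤ K)) ∧
            ∀ (x : Fin d → ℝ) (a : A),
              u x a = g d x a + δ d * ∫ ω, ⨆ b : A, u (X d ([0]) x a ω) b ∂μ) →
            u = q d) ∧
      ∃ (N : ℝ → ℕ) (c : ℝ), ∀ (d : ℕ) (ε : ℝ), 0 < ε → ε ≤ 1 →
        C d (N ε) ≤ c * R d * ε ^ (-c) ∧
          ∀ x : Fin d → ℝ,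
            (∫⁻ ω, ENNReal.ofReal ((⨆ a : A, |q d x a - Q d (N ε) ([0]) x a ω|) ^ 2) ∂μ)
              ≤ ENNReal.ofReal (ε ^ 2) := by
  obtain ⟨K₀, hK₀⟩ := hg_bd
  have hK0 : 0 ≤ max K₀ 0 := le_max_right _ _
  have hgK : ∀ d x a, |g d x a| ≤ max K₀ 0 := fun d x a => (hK₀ d x a).trans (le_max_left _ _)
  generalize max K₀ 0 = K at hK0 hgK
  have ha : (1 : ℝ) ≤ Fintype.card A := by exact_mod_cast Fintype.card_pos
  have h1δ : ∀ d, 0 < 1 - δ d := fun d => sub_pos.2 (hδ1 d)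
  have hMpos : (0 : ℝ) < M := by
    have := h1δ 0
    exact lt_of_lt_of_le (by positivity) (hM 0)
  have hM1 : 1 ≤ M := by exact_mod_cast hMpos
  -- `hM` says `2 |A| r ≤ 1 - δ_d` for the Monte Carlo factor `r = M ^ (-1/2)`, so that
  -- `D = 1 - 2 |A| r` bounds all discount factors.
  set r : ℝ := (√(M : ℝ))⁻¹ with hr_def
  have hr : 0 < r := inv_pos.2 (Real.sqrt_pos.2 hMpos)
  have hrM : r ^ 2 = (M : ℝ)⁻¹ := by rw [hr_def, inv_pow, Real.sq_sqrt hMpos.le]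
  set D : ℝ := 1 - 2 * Fintype.card A * r with hD_def
  have hδD : ∀ d, δ d ≤ D := fun d => by
    have h1 : 2 * (Fintype.card A : ℝ) / (1 - δ d) ≤ √(M : ℝ) := by
      refine Real.le_sqrt_of_sq_le (le_trans (le_of_eq ?_) (hM d))
      rw [div_pow, mul_pow]
      norm_num
    rw [div_le_iff₀ (h1δ d), mul_comm (√(M : ℝ)), ← div_le_iff₀ (Real.sqrt_pos.2 hMpos),
      div_eq_mul_inv] at h1
    linarith
  have hD0 : 0 ≤ D := (hδ0 0).trans (hδD 0)
  have hD1 : 0 < 1 - D := by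
    rw [hD_def, sub_sub_cancel]
    positivity
  obtain ⟨ρ, hrρ, hρ1, hrate⟩ := MLFP.exists_rate ha hr hD_def hD0
  have hset : ∀ d, MLFP.Setting μ K (g d) (F d) (X d) (δ d) M (Q d) := fun d =>
    ⟨hg_meas d, hgK d, hFsub d, hFindep d, hXmeas d, hXid d, hδ0 d, hδ1 d, hM1, hQ d⟩
  have hbell := fun d => MLFP.exists_bellman (μ := μ) hK0 (hδ0 d) (hδ1 d) (hg_meas d) (hgK d)
    ((hset d).measurable_X [0])
  choose q hq_meas hq_bd hq_eq using hbell
  have hKD : 0 ≤ K / (1 - D) := div_nonneg hK0 hD1.le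
  have hq_bd' : ∀ d x a, |q d x a| ≤ K / (1 - D) := fun d x a =>
    (hq_bd d x a).trans (div_le_div_of_nonneg_left hK0 hD1 (by linarith [hδD d]))
  have hB1 : 1 ≤ 1 + K + K / (1 - D) := by linarith
  have hM4 : (1 : ℝ) ≤ 4 * M := by
    have : (1 : ℝ) ≤ M := by exact_mod_cast hM1
    linarith
  obtain ⟨N, c, hN⟩ := MLFP.exists_complexity hB1 (hr.trans hrρ) hρ1 hM4
  refine ⟨q, fun d => ⟨⟨⟨hq_meas d, _, hq_bd d⟩, hq_eq d⟩, ?_⟩, N, c, fun d ε hε hε1 => ⟨?_, ?_⟩⟩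
  · rintro u ⟨⟨hu_meas, L, hu_bd⟩, hu_eq⟩
    exact MLFP.bellman_unique (hδ0 d) (hδ1 d) ((hset d).measurable_X [0]) hu_meas (hq_meas d)
      hu_bd (hq_bd d) hu_eq (hq_eq d)
  · calc C d (N ε) ≤ R d * (4 * M) ^ N ε := MLFP.cost_le (hR d) hM1 (hC_rec d) _
      _ ≤ R d * (c * ε ^ (-c)) := mul_le_mul_of_nonneg_left (hN ε hε hε1).2 (hR d)
      _ = _ := by ring
  · intro x
    refine (MLFP.eLpNorm_two_le_iff _ hε.le).1 (le_trans ?_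
      (ENNReal.ofReal_le_ofReal (hN ε hε hε1).1))
    exact (hset d).eLpNorm_err_le (hq_meas d) (hq_bd' d) (hq_eq d) (by linarith) (by linarith)
      (by linarith) (hδD d) hr hrM hrρ hrate (N ε) [0] x
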